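/- arXiv:2005.08237 — 10 statements merged into one kernel-verified Lean document; each statement's English description precedes it below -/
import Mathlib

section
/- Liouville's theorem for harmonic functions with polynomial growth: let n ≥ 1 and let h : ℝⁿ → ℝ be a smooth function with Δh = 0 on all of ℝⁿ (where Δh = Σᵢ ∂²h/∂xᵢ²). Suppose there is a real polynomial P in n variables of total degree k such that |h(x)| ≤ |P(x)| for all x ∈ ℝⁿ. Then h is itself (the evaluation of) a polynomial in n variables of total degree at most k. -/
/-
A radial function `y ↦ g (‖y‖ ^ 2)` with compact support satisfies `g (‖y‖ ^ 2) • y = ∇ψ y` for a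
compactly supported `ψ`, so Green's identity gives `∫ g (‖y‖ ^ 2) • Df(y) y = 0` for `f` harmonic.
Applied to the harmonic functions `y ↦ f (x + t • y)` and integrated over `t ∈ [0, 1]`, this is the
mean value property for radial averages about `x`. Averaging against a smooth bump function makes
`f` smooth and bounds its gradient at the centre of a ball by its supremum over the ball. Iterating
on the harmonic derivatives of `f` gives Cauchy estimates on large balls, which force the derivative
of order `k + 1` of a harmonic function of growth `O(‖x‖ ^ k)` to vanish; Taylor's formula then
exhibits it as a polynomial.
-/

open InnerProductSpace Laplacian MeasureTheory Metric Module Set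
open scoped Convolution ContDiff

section Derivatives

variable {E F : Type*} [NormedAddCommGroup E] [NormedSpace ℝ E]
  [NormedAddCommGroup F] [NormedSpace ℝ F] {f : E → F}

lemma fderiv_comp_add_smul (f : E → F) (x y : E) (t : ℝ) :
    fderiv ℝ (fun z ↦ f (x + t • z)) y = t • fderiv ℝ f (x + t • y) := by
  rw [fderiv_comp_smul (f := fun z ↦ f (x + z)), fderiv_comp_add_left]

lemma fderiv_fderiv_apply_comm (hf : ContDiff ℝ 2 f) (x v w : E) :
    fderiv ℝ (fderiv ℝ f) x v w = fderiv ℝ (fderiv ℝ f) x w v :=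
  (hf.contDiffAt.isSymmSndFDerivAt (by simp)).eq v w

lemma fderiv_fderiv_fderiv_apply (hf : ContDiff ℝ 3 f) (x u v w : E) :
    fderiv ℝ (fun y ↦ fderiv ℝ (fderiv ℝ f) y v w) x u =
      fderiv ℝ (fderiv ℝ (fderiv ℝ f)) x u v w := by
  have hdiff : DifferentiableAt ℝ (fderiv ℝ (fderiv ℝ f)) x := by
    have hderiv : ContDiff ℝ 2 (fderiv ℝ f) := hf.fderiv_right (by norm_num)
    exact (hderiv.fderiv_right (m := 1) (by norm_num)).differentiable (by norm_num) x
  rw [fderiv_clm_apply (by fun_prop) (by fun_prop), fderiv_clm_apply hdiff (by fun_prop)]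
  simp

lemma fderiv_fderiv_fderiv_apply_rotate (hf : ContDiff ℝ 3 f) (x u v w : E) :
    fderiv ℝ (fderiv ℝ (fderiv ℝ f)) x u v w = fderiv ℝ (fderiv ℝ (fderiv ℝ f)) x v w u := by
  have hderiv : ContDiff ℝ 2 (fderiv ℝ f) := hf.fderiv_right (by norm_num)
  rw [fderiv_fderiv_apply_comm hderiv, ← fderiv_fderiv_fderiv_apply hf x v u w,
    ← fderiv_fderiv_fderiv_apply hf x v w u]
  simp only [fderiv_fderiv_apply_comm (hf.of_le (by norm_num)) _ u w]

lemma integral_fderiv_add_smul_eq_sub [CompleteSpace F] (hf : ContDiff ℝ 1 f) (x y : E) :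
    ∫ t in (0 : ℝ)..1, fderiv ℝ f (x + t • y) y = f (x + y) - f x := by
  have htaylor := map_add_eq_sum_add_integral_iteratedFDeriv (f := f) (x := x) (y := y) (n := 0)
    fun t _ ↦ by simpa using hf.contDiffAt
  simp [htaylor]

end Derivatives

section Harmonic

variable {E F : Type*} [NormedAddCommGroup E] [InnerProductSpace ℝ E] [FiniteDimensional ℝ E]
  [NormedAddCommGroup F] [NormedSpace ℝ F] {f : E → F}

lemma laplacian_eq_sum_fderiv_fderiv {ι : Type*} [Fintype ι] (b : OrthonormalBasis ι ℝ E)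
    (f : E → F) (x : E) : Δ f x = ∑ i, fderiv ℝ (fderiv ℝ f) x (b i) (b i) := by
  simp [laplacian_eq_iteratedFDeriv_orthonormalBasis f b, iteratedFDeriv_two_apply]

lemma laplacian_comp_add_smul (hf : ContDiff ℝ 2 f) (x y : E) (t : ℝ) :
    Δ (fun z ↦ f (x + t • z)) y = t ^ 2 • Δ f (x + t • y) := by
  have htranslate : ContDiff ℝ 2 (fun z ↦ f (x + z)) := by fun_prop
  simp only [laplacian_eq_iteratedFDeriv_stdOrthonormalBasis,
    iteratedFDeriv_comp_const_smul (f := fun z ↦ f (x + z)) (i := 2) t (mod_cast htranslate),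
    iteratedFDeriv_comp_add_left, smul_apply, Finset.smul_sum]

lemma laplacian_fderiv (hf : ContDiff ℝ 3 f) : Δ (fderiv ℝ f) = fderiv ℝ (Δ f) := by
  let b := stdOrthonormalBasis ℝ E
  have hdiff (i) : Differentiable ℝ fun y ↦ fderiv ℝ (fderiv ℝ f) y (b i) (b i) := by
    have hderiv : ContDiff ℝ 2 (fderiv ℝ f) := hf.fderiv_right (by norm_num)
    have := (hderiv.fderiv_right (m := 1) (by norm_num)).differentiable (by norm_num)
    fun_prop
  ext x v
  rw [funext (laplacian_eq_sum_fderiv_fderiv b f), laplacian_eq_sum_fderiv_fderiv b,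
    fderiv_fun_sum fun i _ ↦ hdiff i x]
  simp only [sum_apply, fderiv_fderiv_fderiv_apply hf,
    fderiv_fderiv_fderiv_apply_rotate hf x v]

lemma harmonicOnNhd_univ_iff : HarmonicOnNhd f univ ↔ ContDiff ℝ 2 f ∧ Δ f = 0 := by
  refine ⟨fun hf ↦ ⟨?_, ?_⟩, fun ⟨hf, hΔ⟩ x _ ↦ ⟨hf.contDiffAt, .of_eq hΔ⟩⟩
  · exact contDiff_iff_contDiffAt.2 fun x ↦ (hf x (mem_univ x)).1
  · exact funext fun x ↦ (hf x (mem_univ x)).2.self_of_nhds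

lemma harmonicOnNhd_univ_comp_add_smul (hf : HarmonicOnNhd f univ) (x : E) (t : ℝ) :
    HarmonicOnNhd (fun y ↦ f (x + t • y)) univ := by
  rw [harmonicOnNhd_univ_iff] at hf ⊢
  refine ⟨hf.1.comp (by fun_prop), ?_⟩
  ext y
  simp [laplacian_comp_add_smul hf.1, hf.2]

lemma harmonicOnNhd_univ_fderiv (hf : HarmonicOnNhd f univ) (hsmooth : ContDiff ℝ 3 f) :
    HarmonicOnNhd (fderiv ℝ f) univ := by
  rw [harmonicOnNhd_univ_iff] at hf ⊢
  refine ⟨hsmooth.fderiv_right (by norm_num), ?_⟩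
  ext x
  simp [laplacian_fderiv hsmooth, hf.2]

end Harmonic

section RadialPotential

variable {E F : Type*} [NormedAddCommGroup E] {R : ℝ}

lemma comp_norm_sq_eq_zero [Zero F] {G : ℝ → F} (hG : ∀ s ≥ R, G s = 0) {y : E}
    (hy : y ∉ closedBall 0 √R) : G (‖y‖ ^ 2) = 0 := by
  rw [mem_closedBall_zero_iff, not_le] at hy
  exact hG _ ((Real.sqrt_lt' ((Real.sqrt_nonneg R).trans_lt hy)).1 hy).le

lemma hasCompactSupport_comp_norm_sq [ProperSpace E] [Zero F] {G : ℝ → F} (hG : ∀ s ≥ R, G s = 0) :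
    HasCompactSupport fun y : E ↦ G (‖y‖ ^ 2) :=
  .intro (isCompact_closedBall 0 √R) fun _ hy ↦ comp_norm_sq_eq_zero hG hy

/-- The radial function `ψ` with gradient `g (‖y‖ ^ 2) • y` that vanishes on the sphere
`‖y‖ ^ 2 = R`. It has compact support as soon as `g` vanishes on `[R, ∞)`. -/
noncomputable def radialPotential (g : ℝ → ℝ) (R : ℝ) (y : E) : ℝ :=
  2⁻¹ * ∫ s in R..‖y‖ ^ 2, g s

lemma hasCompactSupport_radialPotential [ProperSpace E] {g : ℝ → ℝ}
    (hgR : ∀ s ≥ R, g s = 0) : HasCompactSupport (radialPotential g R : E → ℝ) := by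
  refine hasCompactSupport_comp_norm_sq (R := R) (G := fun r ↦ 2⁻¹ * ∫ s in R..r, g s)
    fun r hr ↦ ?_
  have hzero : EqOn g 0 (uIcc R r) := fun s hs ↦ hgR s (by simpa [hr.le] using hs.1)
  simp [intervalIntegral.integral_congr hzero]

end RadialPotential

section GreenIdentity

variable {E F : Type*} [NormedAddCommGroup E] [InnerProductSpace ℝ E] [FiniteDimensional ℝ E]
  [MeasurableSpace E] [BorelSpace E] [NormedAddCommGroup F] [NormedSpace ℝ F]

lemma integral_fderiv_smul_eq_neg_smul_fderiv {ψ : E → ℝ} {u : E → F} (hψ : ContDiff ℝ 1 ψ)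
    (hsupp : HasCompactSupport ψ) (hu : ContDiff ℝ 1 u) (v : E) :
    ∫ y, fderiv ℝ ψ y v • u y = -∫ y, ψ y • fderiv ℝ u y v := by
  have hψ' : Continuous fun y ↦ fderiv ℝ ψ y v :=
    (hψ.continuous_fderiv one_ne_zero).clm_apply continuous_const
  have hu' : Continuous fun y ↦ fderiv ℝ u y v :=
    (hu.continuous_fderiv one_ne_zero).clm_apply continuous_const
  rw [integral_smul_fderiv_eq_neg_fderiv_smul_of_integrable, neg_neg]
  · exact (hψ'.smul hu.continuous).integrable_of_hasCompactSupport
      (hsupp.fderiv_apply ℝ v).smul_right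
  · exact (hψ.continuous.smul hu').integrable_of_hasCompactSupport hsupp.smul_right
  · exact (hψ.continuous.smul hu.continuous).integrable_of_hasCompactSupport hsupp.smul_right
  · exact fun y _ ↦ hψ.differentiable one_ne_zero y
  · exact fun y _ ↦ hu.differentiable one_ne_zero y

lemma integral_sum_fderiv_smul_fderiv_eq_neg_smul_laplacian {ι : Type*} [Fintype ι]
    (b : OrthonormalBasis ι ℝ E) {ψ : E → ℝ} {f : E → F} (hψ : ContDiff ℝ 1 ψ)
    (hsupp : HasCompactSupport ψ) (hf : ContDiff ℝ 2 f) :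
    ∫ y, ∑ i, fderiv ℝ ψ y (b i) • fderiv ℝ f y (b i) = -∫ y, ψ y • Δ f y := by
  have hderiv : ContDiff ℝ 1 (fderiv ℝ f) := hf.fderiv_right (by norm_num)
  have hpartial (i) : ContDiff ℝ 1 fun y ↦ fderiv ℝ f y (b i) := hderiv.clm_apply contDiff_const
  have hpartial_apply (i y) : fderiv ℝ (fun z ↦ fderiv ℝ f z (b i)) y (b i) =
      fderiv ℝ (fderiv ℝ f) y (b i) (b i) := by
    rw [fderiv_clm_apply (hderiv.differentiable one_ne_zero y) (by fun_prop)]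
    simp
  have hintegrable_left (i) : Integrable fun y ↦ fderiv ℝ ψ y (b i) • fderiv ℝ f y (b i) :=
    (((hψ.continuous_fderiv one_ne_zero).clm_apply continuous_const).smul
      (hpartial i).continuous).integrable_of_hasCompactSupport (hsupp.fderiv_apply ℝ _).smul_right
  have hintegrable_right (i) : Integrable fun y ↦ ψ y • fderiv ℝ (fderiv ℝ f) y (b i) (b i) :=
    (hψ.continuous.smul (((hderiv.continuous_fderiv one_ne_zero).clm_apply
      continuous_const).clm_apply continuous_const)).integrable_of_hasCompactSupport
        hsupp.smul_right
  simp only [integral_finsetSum _ fun i _ ↦ hintegrable_left i,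
    integral_fderiv_smul_eq_neg_smul_fderiv hψ hsupp (hpartial _), hpartial_apply,
    laplacian_eq_sum_fderiv_fderiv b, Finset.smul_sum,
    integral_finsetSum _ fun i _ ↦ hintegrable_right i, Finset.sum_neg_distrib]

end GreenIdentity

section MeanValue

variable {E F : Type*} [NormedAddCommGroup E] [InnerProductSpace ℝ E]
  [NormedAddCommGroup F] [NormedSpace ℝ F] {g : ℝ → ℝ} {R : ℝ} {f : E → F}

lemma hasFDerivAt_radialPotential (hg : Continuous g) (R : ℝ) (y : E) :
    HasFDerivAt (radialPotential g R) (g (‖y‖ ^ 2) • innerSL ℝ y) y := by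
  have hprimitive := (hg.integral_hasStrictDerivAt R (‖y‖ ^ 2)).hasDerivAt.comp_hasFDerivAt y
    (hasStrictFDerivAt_norm_sq y).hasFDerivAt
  refine (hprimitive.const_mul 2⁻¹).congr_fderiv ?_
  ext v
  simp
  ring

lemma contDiff_radialPotential (hg : Continuous g) (R : ℝ) :
    ContDiff ℝ 1 (radialPotential g R : E → ℝ) := by
  refine contDiff_one_iff_hasFDerivAt.2
    ⟨_, ?_, fun y ↦ hasFDerivAt_radialPotential hg R y⟩
  fun_prop

variable [FiniteDimensional ℝ E] [MeasurableSpace E] [BorelSpace E]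

lemma integral_comp_norm_sq_smul_fderiv_self_of_harmonicOnNhd_univ
    (hf : HarmonicOnNhd f univ) (hg : Continuous g) (hgR : ∀ s ≥ R, g s = 0) :
    ∫ y : E, g (‖y‖ ^ 2) • fderiv ℝ f y y = 0 := by
  rw [harmonicOnNhd_univ_iff] at hf
  let b := stdOrthonormalBasis ℝ E
  have hexpand (y : E) : g (‖y‖ ^ 2) • fderiv ℝ f y y =
      ∑ i, fderiv ℝ (radialPotential g R) y (b i) • fderiv ℝ f y (b i) := by
    conv_lhs => enter [2, 2]; rw [← b.sum_repr' y]
    simp [(hasFDerivAt_radialPotential hg R y).fderiv, Finset.smul_sum, smul_smul,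
      real_inner_comm]
  simp_rw [hexpand]
  rw [integral_sum_fderiv_smul_fderiv_eq_neg_smul_laplacian b (contDiff_radialPotential hg R)
    (hasCompactSupport_radialPotential hgR) hf.1]
  simp [hf.2]

lemma integrable_prod_comp_norm_sq_smul {H : ℝ × E → F} (hg : Continuous g)
    (hgR : ∀ s ≥ R, g s = 0) (hH : Continuous H) (a b : ℝ) :
    Integrable (fun p : ℝ × E ↦ g (‖p.2‖ ^ 2) • H p)
      ((volume.restrict (uIoc a b)).prod volume) := by
  have hcontinuous : Continuous fun p : ℝ × E ↦ g (‖p.2‖ ^ 2) • H p := by fun_prop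
  have hcompact : IntegrableOn (fun p : ℝ × E ↦ g (‖p.2‖ ^ 2) • H p)
      (uIcc a b ×ˢ closedBall 0 √R) (volume.prod volume) :=
    hcontinuous.continuousOn.integrableOn_compact
      (isCompact_uIcc.prod (isCompact_closedBall 0 √R))
  have hstrip : IntegrableOn (fun p : ℝ × E ↦ g (‖p.2‖ ^ 2) • H p)
      (uIcc a b ×ˢ univ) (volume.prod volume) := by
    refine hcompact.of_forall_sdiff_eq_zero (measurableSet_uIcc.prod .univ) fun p hp ↦ ?_
    rw [comp_norm_sq_eq_zero hgR (by simpa using hp.2 ⟨hp.1.1, ·⟩), zero_smul]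
  rw [← Measure.restrict_univ (μ := (volume : Measure E)), Measure.prod_restrict]
  exact hstrip.mono_set (prod_mono uIoc_subset_uIcc Subset.rfl)

theorem integral_comp_norm_sq_smul_of_harmonicOnNhd_univ [CompleteSpace F]
    (hf : HarmonicOnNhd f univ) (hg : Continuous g) (hgR : ∀ s ≥ R, g s = 0) (x : E) :
    ∫ y : E, g (‖y‖ ^ 2) • f (x + y) = (∫ y : E, g (‖y‖ ^ 2)) • f x := by
  have hsmooth : ContDiff ℝ 2 f := (harmonicOnNhd_univ_iff.1 hf).1
  have hradial (t : ℝ) (ht : t ∈ uIoc (0 : ℝ) 1) :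
      ∫ y : E, g (‖y‖ ^ 2) • fderiv ℝ f (x + t • y) y = 0 := by
    have ht0 : t ≠ 0 := by
      rw [uIoc_of_le zero_le_one] at ht
      exact ht.1.ne'
    have hscaled := integral_comp_norm_sq_smul_fderiv_self_of_harmonicOnNhd_univ
      (harmonicOnNhd_univ_comp_add_smul hf x t) hg hgR
    simpa [fderiv_comp_add_smul, smul_comm _ t, integral_smul, ht0] using hscaled
  have hderiv : Continuous fun p : ℝ × E ↦ fderiv ℝ f (x + p.1 • p.2) p.2 :=
    ((hsmooth.continuous_fderiv two_ne_zero).comp (by fun_prop)).clm_apply continuous_snd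
  have hdiff : ∫ y : E, g (‖y‖ ^ 2) • (f (x + y) - f x) = 0 := calc
    _ = ∫ y : E, ∫ t in (0 : ℝ)..1, g (‖y‖ ^ 2) • fderiv ℝ f (x + t • y) y := by
      simp only [intervalIntegral.integral_smul,
        integral_fderiv_add_smul_eq_sub (hsmooth.of_le one_le_two)]
    _ = ∫ t in (0 : ℝ)..1, ∫ y : E, g (‖y‖ ^ 2) • fderiv ℝ f (x + t • y) y :=
      (intervalIntegral_integral_swap (integrable_prod_comp_norm_sq_smul hg hgR hderiv 0 1)).symm
    _ = 0 := intervalIntegral.integral_zero_ae (.of_forall hradial)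
  have hintegrable {u : E → F} (hu : Continuous u) : Integrable fun y : E ↦ g (‖y‖ ^ 2) • u y :=
    ((hg.comp (by fun_prop)).smul hu).integrable_of_hasCompactSupport
      (hasCompactSupport_comp_norm_sq hgR).smul_right
  simp_rw [smul_sub] at hdiff
  rw [integral_sub (hintegrable (u := fun y ↦ f (x + y)) (by fun_prop))
    (hintegrable (u := fun _ ↦ f x) continuous_const), integral_smul_const, sub_eq_zero] at hdiff
  exact hdiff

end MeanValue

section RadialAverage

variable {E F : Type*} [NormedAddCommGroup E] [InnerProductSpace ℝ E]
  [NormedAddCommGroup F] [NormedSpace ℝ F] {f : E → F}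

/-- The smooth radial bump function on the closed unit ball against which harmonic functions are
averaged. -/
noncomputable def radialBump (y : E) : ℝ :=
  Real.smoothTransition (1 - ‖y‖ ^ 2)

lemma contDiff_radialBump {n : ℕ∞} : ContDiff ℝ n (radialBump : E → ℝ) :=
  Real.smoothTransition.contDiff.comp (contDiff_const.sub (contDiff_norm_sq ℝ))

lemma smoothTransition_one_sub_eq_zero : ∀ s ≥ (1 : ℝ), Real.smoothTransition (1 - s) = 0 :=
  fun _ hs ↦ Real.smoothTransition.zero_of_nonpos (sub_nonpos.2 hs)

lemma support_fderiv_radialBump_subset :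
    Function.support (fderiv ℝ (radialBump : E → ℝ)) ⊆ closedBall 0 1 := by
  refine (support_fderiv_subset ℝ).trans (closure_minimal (fun y hy ↦ ?_) isClosed_closedBall)
  contrapose! hy
  exact Function.notMem_support.2 <| comp_norm_sq_eq_zero
    (G := fun s ↦ Real.smoothTransition (1 - s)) smoothTransition_one_sub_eq_zero
    (by simpa using hy)

variable [FiniteDimensional ℝ E]

lemma hasCompactSupport_radialBump : HasCompactSupport (radialBump : E → ℝ) :=
  hasCompactSupport_comp_norm_sq (G := fun s ↦ Real.smoothTransition (1 - s))
    smoothTransition_one_sub_eq_zero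

variable [MeasurableSpace E] [BorelSpace E]

lemma integral_radialBump_pos : 0 < ∫ y : E, radialBump y :=
  (contDiff_radialBump (n := 0)).continuous.integral_pos_of_hasCompactSupport_nonneg_nonzero
    (x := 0) hasCompactSupport_radialBump (fun _ ↦ Real.smoothTransition.nonneg _)
    (by simp [radialBump])

variable [CompleteSpace F]

lemma radialBump_convolution_eq_integral_smul (hf : HarmonicOnNhd f univ) :
    (radialBump ⋆[ContinuousLinearMap.lsmul ℝ ℝ, volume] f) =
      fun x ↦ (∫ y : E, radialBump y) • f x := by
  ext x
  have hmean := integral_comp_norm_sq_smul_of_harmonicOnNhd_univ hf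
    (g := fun s ↦ Real.smoothTransition (1 - s)) (by fun_prop) smoothTransition_one_sub_eq_zero x
  rw [convolution_def, ← integral_neg_eq_self]
  simpa [radialBump] using hmean

variable (E) in
/-- The constant in the gradient estimate for harmonic functions that the averaging kernel
`radialBump` yields. -/
noncomputable def gradientConstant : ℝ :=
  (∫ y : E, radialBump y)⁻¹ * ∫ y : E, ‖fderiv ℝ radialBump y‖

lemma integral_radialBump_smul_fderiv_eq_convolution (hf : HarmonicOnNhd f univ) (x : E) :
    (∫ y : E, radialBump y) • fderiv ℝ f x =
      (fderiv ℝ radialBump ⋆[(ContinuousLinearMap.lsmul ℝ ℝ).precompL E, volume] f) x := by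
  have hsmooth := (harmonicOnNhd_univ_iff.1 hf).1
  rw [← fderiv_fun_const_smul (hsmooth.differentiable two_ne_zero x),
    ← radialBump_convolution_eq_integral_smul hf]
  exact (hasCompactSupport_radialBump.hasFDerivAt_convolution_left _ contDiff_radialBump
    hsmooth.continuous.locallyIntegrable x).fderiv

lemma norm_fderiv_le_of_harmonicOnNhd_univ (hf : HarmonicOnNhd f univ) {x : E} {M : ℝ}
    (hM : ∀ y ∈ closedBall x 1, ‖f y‖ ≤ M) : ‖fderiv ℝ f x‖ ≤ gradientConstant E * M := by
  have hkernel (y : E) : ‖(ContinuousLinearMap.lsmul ℝ ℝ).precompL E (fderiv ℝ radialBump y)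
      (f (x - y))‖ ≤ ‖fderiv ℝ radialBump y‖ * M := by
    by_cases hy : fderiv ℝ radialBump y = 0
    · simp [hy]
    have hxy : x - y ∈ closedBall x 1 := by
      simpa [dist_eq_norm] using support_fderiv_radialBump_subset hy
    refine (ContinuousLinearMap.le_opNorm₂ _ _ _).trans ?_
    calc
      _ ≤ 1 * ‖fderiv ℝ radialBump y‖ * ‖f (x - y)‖ := by
        gcongr
        exact (ContinuousLinearMap.norm_precompL_le _ _).trans ContinuousLinearMap.opNorm_lsmul_le
      _ ≤ ‖fderiv ℝ radialBump y‖ * M := by rw [one_mul]; gcongr; exact hM _ hxy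
  have hintegrable : Integrable fun y : E ↦ ‖fderiv ℝ radialBump y‖ :=
    ((contDiff_radialBump.continuous_fderiv one_ne_zero).integrable_of_hasCompactSupport
      (hasCompactSupport_radialBump.fderiv ℝ)).norm
  have hbound : (∫ y : E, radialBump y) * ‖fderiv ℝ f x‖ ≤
      (∫ y : E, ‖fderiv ℝ radialBump y‖) * M := by
    rw [← Real.norm_of_nonneg (integral_radialBump_pos (E := E)).le, ← norm_smul,
      integral_radialBump_smul_fderiv_eq_convolution hf, ← integral_mul_const]
    exact norm_integral_le_of_norm_le (hintegrable.mul_const M) (.of_forall hkernel)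
  rwa [gradientConstant, mul_assoc, ← div_eq_inv_mul, le_div_iff₀' integral_radialBump_pos]

lemma mul_norm_fderiv_le_of_harmonicOnNhd_univ (hf : HarmonicOnNhd f univ) {x : E} {t M : ℝ}
    (ht : 0 ≤ t) (hM : ∀ y ∈ closedBall x t, ‖f y‖ ≤ M) :
    t * ‖fderiv ℝ f x‖ ≤ gradientConstant E * M := by
  have hscaled : ‖fderiv ℝ (fun y ↦ f (x + t • y)) 0‖ ≤ gradientConstant E * M := by
    refine norm_fderiv_le_of_harmonicOnNhd_univ (harmonicOnNhd_univ_comp_add_smul hf x t)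
      fun y hy ↦ hM _ ?_
    rw [mem_closedBall_zero_iff] at hy
    simpa [norm_smul, abs_of_nonneg ht] using mul_le_of_le_one_right ht hy
  simpa [fderiv_comp_add_smul, norm_smul, abs_of_nonneg ht] using hscaled

end RadialAverage

section Regularity

variable {E F : Type*} [NormedAddCommGroup E] [InnerProductSpace ℝ E] [FiniteDimensional ℝ E]
  [NormedAddCommGroup F] [NormedSpace ℝ F] [CompleteSpace F] {f : E → F}

theorem contDiff_of_harmonicOnNhd_univ (hf : HarmonicOnNhd f univ) : ContDiff ℝ ∞ f := by
  borelize E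
  have hconv : ContDiff ℝ ∞ (radialBump ⋆[ContinuousLinearMap.lsmul ℝ ℝ, volume] f) :=
    hasCompactSupport_radialBump.contDiff_convolution_left _ contDiff_radialBump
      (harmonicOnNhd_univ_iff.1 hf).1.continuous.locallyIntegrable
  rw [radialBump_convolution_eq_integral_smul hf] at hconv
  simpa [smul_smul, integral_radialBump_pos.ne'] using
    hconv.const_smul (∫ y : E, radialBump y)⁻¹

lemma harmonicOnNhd_univ_iteratedFDeriv (hf : HarmonicOnNhd f univ) (j : ℕ) :
    HarmonicOnNhd (iteratedFDeriv ℝ j f) univ := by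
  induction j with
  | zero =>
    rw [iteratedFDeriv_zero_eq_comp]
    exact (harmonicOnNhd_comp_CLE_iff
      (continuousMultilinearCurryFin0 ℝ E F).symm.toContinuousLinearEquiv).2 hf
  | succ j ih =>
    have hsmooth : ContDiff ℝ ∞ (iteratedFDeriv ℝ j f) := contDiff_of_harmonicOnNhd_univ ih
    have hderiv : HarmonicOnNhd (fderiv ℝ (iteratedFDeriv ℝ j f)) univ :=
      harmonicOnNhd_univ_fderiv ih (contDiff_infty.1 hsmooth 3)
    rw [iteratedFDeriv_succ_eq_comp_left]
    let e := (continuousMultilinearCurryLeftEquiv ℝ (fun _ : Fin (j + 1) ↦ E) F).symm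
    exact hderiv.comp_CLM e.toContinuousLinearEquiv.toContinuousLinearMap

theorem pow_mul_norm_iteratedFDeriv_le_of_harmonicOnNhd_univ [MeasurableSpace E]
    [BorelSpace E] (hf : HarmonicOnNhd f univ) (j : ℕ) {x : E} {t M : ℝ} (ht : 0 < t)
    (hM : ∀ y ∈ closedBall x (j * t), ‖f y‖ ≤ M) :
    t ^ j * ‖iteratedFDeriv ℝ j f x‖ ≤ gradientConstant E ^ j * M := by
  induction j generalizing x with
  | zero => simpa using hM x (by simp)
  | succ j ih =>
    have hstep (y) (hy : y ∈ closedBall x t) :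
        ‖iteratedFDeriv ℝ j f y‖ ≤ gradientConstant E ^ j * M / t ^ j := by
      rw [le_div_iff₀' (pow_pos ht j)]
      refine ih fun z hz ↦ hM z (closedBall_subset_closedBall' ?_ hz)
      push_cast
      linarith [mem_closedBall.1 hy]
    calc
      _ = t ^ j * (t * ‖fderiv ℝ (iteratedFDeriv ℝ j f) x‖) := by
        rw [norm_fderiv_iteratedFDeriv, pow_succ, mul_assoc]
      _ ≤ t ^ j * (gradientConstant E * (gradientConstant E ^ j * M / t ^ j)) :=
        mul_le_mul_of_nonneg_left (mul_norm_fderiv_le_of_harmonicOnNhd_univ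
          (harmonicOnNhd_univ_iteratedFDeriv hf j) ht.le hstep) (by positivity)
      _ = gradientConstant E ^ (j + 1) * M := by
        field_simp
        ring

theorem iteratedFDeriv_succ_eq_zero_of_harmonicOnNhd_univ (hf : HarmonicOnNhd f univ) {A : ℝ}
    {k : ℕ} (hgrowth : ∀ x, ‖f x‖ ≤ A * (1 + ‖x‖) ^ k) : iteratedFDeriv ℝ (k + 1) f = 0 := by
  borelize E
  have hA : 0 ≤ A := by simpa using (norm_nonneg _).trans (hgrowth 0)
  ext1 x
  let r := 1 + ‖x‖ + (k + 1)
  have hbound (t : ℝ) (ht : 1 ≤ t) :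
      t * ‖iteratedFDeriv ℝ (k + 1) f x‖ ≤ gradientConstant E ^ (k + 1) * (A * r ^ k) := by
    have hM (y) (hy : y ∈ closedBall x ((k + 1 : ℕ) * t)) : ‖f y‖ ≤ A * (r * t) ^ k := by
      have hxy : ‖y‖ ≤ ‖x‖ + (k + 1) * t := mod_cast norm_le_of_mem_closedBall hy
      have hradius : 1 + ‖y‖ ≤ r * t := by
        simp only [r]
        nlinarith [norm_nonneg x]
      exact (hgrowth y).trans (by gcongr)
    have hcauchy := pow_mul_norm_iteratedFDeriv_le_of_harmonicOnNhd_univ hf (k + 1)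
      (zero_lt_one.trans_le ht) hM
    refine le_of_mul_le_mul_left ?_ (pow_pos (zero_lt_one.trans_le ht) k)
    calc
      _ = t ^ (k + 1) * ‖iteratedFDeriv ℝ (k + 1) f x‖ := by ring
      _ ≤ _ := hcauchy
      _ = _ := by rw [mul_pow]; ring
  by_contra hne
  obtain ⟨t, ht1, ht⟩ := ((Filter.eventually_ge_atTop (1 : ℝ)).and
    ((Filter.tendsto_id.atTop_mul_const (norm_pos_iff.2 hne)).eventually_gt_atTop _)).exists
  exact (hbound t ht1).not_gt ht

end Regularity

section Polynomial

open MvPolynomial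

lemma norm_eval_le_of_norm_le {σ R : Type*} [NormedField R] (P : MvPolynomial σ R) {x : σ → R}
    {r : ℝ} (hr : 1 ≤ r) (hx : ∀ i, ‖x i‖ ≤ r) :
    ‖eval x P‖ ≤ (∑ d ∈ P.support, ‖coeff d P‖) * r ^ P.totalDegree := by
  rw [eval_eq, Finset.sum_mul]
  refine norm_sum_le_of_le _ fun d hd ↦ ?_
  rw [norm_mul, norm_prod]
  gcongr
  calc
    ∏ i ∈ d.support, ‖x i ^ d i‖ ≤ ∏ i ∈ d.support, r ^ d i := by
      gcongr with i
      rw [norm_pow]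
      gcongr
      exact hx i
    _ = r ^ ∑ i ∈ d.support, d i := Finset.prod_pow_eq_pow_sum _ _ _
    _ ≤ r ^ P.totalDegree := pow_le_pow_right₀ hr (le_totalDegree hd)

variable {ι E : Type*} [Finite ι] [NormedAddCommGroup E] [NormedSpace ℝ E]

lemma exists_eval_repr_eq_map_diagonal (b : Basis ι ℝ E) {j : ℕ} (m : E [×j]→L[ℝ] ℝ) :
    ∃ Q : MvPolynomial ι ℝ, Q.totalDegree ≤ j ∧
      ∀ x, m (fun _ ↦ x) = eval (b.repr x) Q := by
  classical
  have := Fintype.ofFinite ι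
  refine ⟨∑ s : Fin j → ι, C (m fun i ↦ b (s i)) * ∏ i, X (s i), ?_, fun x ↦ ?_⟩
  · refine totalDegree_finsetSum_le fun s _ ↦ ?_
    calc
      _ ≤ (C (m fun i ↦ b (s i)) : MvPolynomial ι ℝ).totalDegree +
          ∑ i : Fin j, (X (s i) : MvPolynomial ι ℝ).totalDegree :=
        (totalDegree_mul _ _).trans (by gcongr; exact totalDegree_finsetProd _ _)
      _ = j := by simp
  · conv_lhs => rw [← b.sum_repr x]
    rw [m.map_sum]
    simp [m.map_smul_univ, mul_comm]

lemma exists_eval_repr_eq_of_iteratedFDeriv_succ_eq_zero (b : Basis ι ℝ E) {f : E → ℝ} {k : ℕ}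
    (hf : ContDiff ℝ (k + 1) f) (hzero : iteratedFDeriv ℝ (k + 1) f = 0) :
    ∃ Q : MvPolynomial ι ℝ, Q.totalDegree ≤ k ∧ ∀ x, f x = eval (b.repr x) Q := by
  choose T hdegree hT using fun j : ℕ ↦ exists_eval_repr_eq_map_diagonal b
    ((j.factorial : ℝ)⁻¹ • iteratedFDeriv ℝ j f 0)
  refine ⟨∑ j ∈ Finset.range (k + 1), T j, ?_, fun x ↦ ?_⟩
  · exact totalDegree_finsetSum_le fun j hj ↦
      (hdegree j).trans (Nat.lt_succ_iff.1 (Finset.mem_range.1 hj))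
  · have htaylor := map_add_eq_sum_add_integral_iteratedFDeriv (f := f) (x := 0) (y := x) (n := k)
      fun t _ ↦ hf.contDiffAt
    simpa [hzero, ← hT] using htaylor

end Polynomial

section Liouville

lemma harmonicOnNhd_univ_iff_sum_iteratedFDeriv {ι F : Type*} [Fintype ι] [DecidableEq ι]
    [NormedAddCommGroup F] [NormedSpace ℝ F] {f : EuclideanSpace ℝ ι → F} :
    HarmonicOnNhd f univ ↔ ContDiff ℝ 2 f ∧ ∀ x, ∑ i, iteratedFDeriv ℝ 2 f x
      ![EuclideanSpace.single i 1, EuclideanSpace.single i 1] = 0 := by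
  rw [harmonicOnNhd_univ_iff, funext_iff,
    laplacian_eq_iteratedFDeriv_orthonormalBasis f (EuclideanSpace.basisFun ι ℝ)]
  simp

lemma abs_eval_le_mul_one_add_norm_pow {ι : Type*} [Fintype ι] (P : MvPolynomial ι ℝ)
    (x : EuclideanSpace ℝ ι) : |MvPolynomial.eval (fun i ↦ x i) P| ≤
      (∑ d ∈ P.support, |P.coeff d|) * (1 + ‖x‖) ^ P.totalDegree :=
  norm_eval_le_of_norm_le P (le_add_of_nonneg_right (norm_nonneg x)) fun i ↦
    (PiLp.norm_apply_le x i).trans (le_add_of_nonneg_left zero_le_one)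

theorem liouville_harmonic_general {ι E : Type*} [NormedAddCommGroup E] [InnerProductSpace ℝ E]
    [FiniteDimensional ℝ E] (b : Basis ι ℝ E) {f : E → ℝ} (hf : HarmonicOnNhd f univ) {A : ℝ}
    {k : ℕ} (hgrowth : ∀ x, |f x| ≤ A * (1 + ‖x‖) ^ k) :
    ∃ Q : MvPolynomial ι ℝ, Q.totalDegree ≤ k ∧ ∀ x, f x = MvPolynomial.eval (b.repr x) Q := by
  have := Module.Finite.finite_basis b
  exact exists_eval_repr_eq_of_iteratedFDeriv_succ_eq_zero b
    (contDiff_infty.1 (contDiff_of_harmonicOnNhd_univ hf) (k + 1))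
    (iteratedFDeriv_succ_eq_zero_of_harmonicOnNhd_univ hf hgrowth)

end Liouville

/-- Liouville's theorem for harmonic functions with polynomial growth: if `h` is a smooth
harmonic function on `ℝⁿ` (`n ≥ 1`) satisfying `|h(x)| ≤ |P(x)|` for some real polynomial `P`
in `n` variables of total degree `k`, then `h` is the evaluation of a polynomial in `n`
variables of total degree at most `k`. -/
theorem liouville_harmonic (n : ℕ) (hn : 1 ≤ n) (h : EuclideanSpace ℝ (Fin n) → ℝ)
    (hsmooth : ContDiff ℝ (⊤ : ℕ∞) h)
    (hharm : ∀ x : EuclideanSpace ℝ (Fin n),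
      ∑ i : Fin n, iteratedFDeriv ℝ 2 h x ![EuclideanSpace.single i (1 : ℝ),
        EuclideanSpace.single i (1 : ℝ)] = 0)
    (P : MvPolynomial (Fin n) ℝ) (k : ℕ) (hP : P.totalDegree = k)
    (hbound : ∀ x : EuclideanSpace ℝ (Fin n),
      |h x| ≤ |MvPolynomial.eval (fun i => x i) P|) :
    ∃ Q : MvPolynomial (Fin n) ℝ, Q.totalDegree ≤ k ∧
      ∀ x : EuclideanSpace ℝ (Fin n), h x = MvPolynomial.eval (fun i => x i) Q := by
  exact liouville_harmonic_general (EuclideanSpace.basisFun (Fin n) ℝ).toBasis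
    (harmonicOnNhd_univ_iff_sum_iteratedFDeriv.2 ⟨contDiff_infty.1 hsmooth 2, hharm⟩)
    fun x ↦ (hbound x).trans (hP ▸ abs_eval_le_mul_one_add_norm_pow P x)
end

section
/- The set (0, 1/4] ∪ {1/3, 1} is a fundamental set for the Gamma function: if f : (0,∞) → ℝ satisfies the gamma functional identities and f(x) = Γ(x) for every x ∈ (0, 1/4] ∪ {1/3, 1}, then f(x) = Γ(x) for every x > 0. -/
/-!
For `g = f / Γ` the identities become `g (x + 1) = g x`, `g x * g (1 - x) = 1` and
`g x = g (x / 2) * g (x / 2 + 1 / 2)`. If `1 / 4 < x < 1 / 2`, then `g (1 / 2 - x) = 1`, so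
duplication at `1 - 2 * x` gives `g (1 - 2 * x) = g (1 - x)`, the inverse of `g x`. Hence the points
of `(0, 1 / 2)` where `g ≠ 1` form a set stable under `x ↦ 1 - 2 * x`. That map doubles the distance
to its fixed point `1 / 3`, and a bounded stable set can then contain nothing but `1 / 3`.
Duplication at `1`, reflection and periodicity then carry `g = 1` to all `x > 0`.
-/

open Set

theorem subset_singleton_of_mapsTo_of_expanding {X : Type*} [MetricSpace X] {T : X → X} {s : Set X}
    {p : X} {K : ℝ} (hs : Bornology.IsBounded s) (hT : MapsTo T s s) (hK : 1 < K)
    (hexp : ∀ x ∈ s, K * dist x p ≤ dist (T x) p) : s ⊆ {p} := by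
  intro x hx
  obtain ⟨C, hC⟩ := hs.subset_closedBall p
  have hiter (n : ℕ) : K ^ n * dist x p ≤ dist (T^[n] x) p := by
    induction n with
    | zero => simp
    | succ n ih =>
      calc K ^ (n + 1) * dist x p = K * (K ^ n * dist x p) := by ring
        _ ≤ K * dist (T^[n] x) p := by gcongr
        _ ≤ dist (T^[n + 1] x) p := by
          rw [Function.iterate_succ_apply']
          exact hexp _ (hT.iterate n hx)
  by_contra hne
  have hpos : 0 < dist x p := dist_pos.mpr hne
  obtain ⟨n, hn⟩ := pow_unbounded_of_one_lt (C / dist x p) hK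
  exact ((div_lt_iff₀ hpos).mp hn).not_ge ((hiter n).trans (hC (hT.iterate n hx)))

theorem exists_mem_Ioc_zero_one_eq_of_add_one {α : Type*} {g : ℝ → α}
    (hadd : ∀ x, 0 < x → g (x + 1) = g x) {x : ℝ} (hx : 0 < x) :
    ∃ y ∈ Ioc (0 : ℝ) 1, g x = g y := by
  have hadd_nat {y : ℝ} (hy : 0 < y) (n : ℕ) : g (y + n) = g y := by
    induction n with
    | zero => simp
    | succ n ih => rw [Nat.cast_succ, ← add_assoc, hadd _ (by positivity), ih]
  obtain ⟨n, hn⟩ := Nat.exists_eq_add_one.mpr (Nat.ceil_pos.mpr hx)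
  have hlt : (n : ℝ) < x := Nat.lt_ceil.mp (by lia)
  have hle : x ≤ n + 1 := by exact_mod_cast hn ▸ Nat.le_ceil x
  refine ⟨x - n, ⟨by linarith, by linarith⟩, ?_⟩
  rw [← hadd_nat (sub_pos.mpr hlt) n, sub_add_cancel]

namespace GammaMultiplier

variable {M : Type*} [MulOneClass M] {g : ℝ → M}
  (hrefl : ∀ x, 0 < x → x < 1 → g x * g (1 - x) = 1)
  (hdup : ∀ x, 0 < x → g x = g (x / 2) * g (x / 2 + 1 / 2))
  (hquarter : ∀ x ∈ Ioc (0 : ℝ) (1 / 4), g x = 1)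

include hrefl hdup hquarter

theorem eq_one_of_one_sub_two_mul {x : ℝ} (hx : x ∈ Ico (1 / 4 : ℝ) (1 / 2))
    (h : g (1 - 2 * x) = 1) : g x = 1 := by
  obtain ⟨hx₁, hx₂⟩ := hx
  have hone_sub : g (1 - x) = 1 := calc
    g (1 - x) = g ((1 - 2 * x) / 2) * g ((1 - 2 * x) / 2 + 1 / 2) := by
      rw [hquarter ((1 - 2 * x) / 2) ⟨by linarith, by linarith⟩, one_mul]
      ring_nf
    _ = 1 := by rw [← hdup _ (by linarith), h]
  simpa only [hone_sub, mul_one] using hrefl x (by linarith) (by linarith)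

theorem eq_one_of_mem_Ioo_zero_half (hthird : g (1 / 3) = 1) {x : ℝ}
    (hx : x ∈ Ioo (0 : ℝ) (1 / 2)) : g x = 1 := by
  by_contra hgx
  let s : Set ℝ := {y ∈ Ioo (0 : ℝ) (1 / 2) | g y ≠ 1}
  have hbounded : Bornology.IsBounded s := (Metric.isBounded_Ioo 0 (1 / 2)).subset (sep_subset _ _)
  have hstable : MapsTo (fun y : ℝ ↦ 1 - 2 * y) s s := by
    rintro y ⟨⟨hy₀, hy₂⟩, hgy⟩
    have hy₁ : 1 / 4 < y := by
      by_contra! hy₁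
      exact hgy (hquarter y ⟨hy₀, hy₁⟩)
    exact ⟨⟨by linarith, by linarith⟩,
      mt (eq_one_of_one_sub_two_mul hrefl hdup hquarter ⟨hy₁.le, hy₂⟩) hgy⟩
  have hexpand (y : ℝ) : dist (1 - 2 * y) (1 / 3) = 2 * dist y (1 / 3) := by
    rw [Real.dist_eq, Real.dist_eq, show 1 - 2 * y - 1 / 3 = -2 * (y - 1 / 3) by ring, abs_mul]
    norm_num
  have hx_third : x = 1 / 3 := subset_singleton_of_mapsTo_of_expanding hbounded hstable
    one_lt_two (fun y _ ↦ (hexpand y).ge) ⟨hx, hgx⟩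
  exact hgx (hx_third ▸ hthird)

theorem eq_one_of_mem_Ioc_zero_one (hthird : g (1 / 3) = 1) (hone : g 1 = 1) {x : ℝ}
    (hx : x ∈ Ioc (0 : ℝ) 1) : g x = 1 := by
  obtain ⟨hx₀, hx₁⟩ := hx
  have hlow {y : ℝ} (hy : y ∈ Ioo (0 : ℝ) (1 / 2)) : g y = 1 :=
    eq_one_of_mem_Ioo_zero_half hrefl hdup hquarter hthird hy
  rcases hx₁.eq_or_lt with rfl | hx₁
  · exact hone
  rcases lt_trichotomy x (1 / 2) with hx | rfl | hx
  · exact hlow ⟨hx₀, hx⟩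
  · simpa only [add_halves, hone, mul_one] using (hdup 1 one_pos).symm
  · simpa only [hlow ⟨sub_pos.mpr hx₁, by linarith⟩, mul_one] using hrefl x hx₀ hx₁

end GammaMultiplier

section GammaRatio

variable {A : Type*} [Ring A] [Algebra ℝ A] {f : ℝ → A} {x : ℝ}

/-- The quotient `f x / Γ x` of a function with values in a real algebra by the Gamma function,
which measures how far `f` is from `Γ`. -/
noncomputable def gammaRatio (f : ℝ → A) (x : ℝ) : A := (Real.Gamma x)⁻¹ • f x

theorem gammaRatio_eq_one_iff (hx : 0 < x) :
    gammaRatio f x = 1 ↔ f x = algebraMap ℝ A (Real.Gamma x) := by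
  rw [gammaRatio, inv_smul_eq_iff₀ (Real.Gamma_pos_of_pos hx).ne', Algebra.algebraMap_eq_smul_one]

theorem gammaRatio_add_one (hx : x ≠ 0) (h : f (x + 1) = x • f x) :
    gammaRatio f (x + 1) = gammaRatio f x := by
  rw [gammaRatio, gammaRatio, h, Real.Gamma_add_one hx, smul_smul, mul_inv_rev,
    inv_mul_cancel_right₀ hx]

theorem gammaRatio_mul_gammaRatio_one_sub (hx₀ : 0 < x) (hx₁ : x < 1)
    (h : f x * f (1 - x) = algebraMap ℝ A (Real.pi / Real.sin (Real.pi * x))) :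
    gammaRatio f x * gammaRatio f (1 - x) = 1 := by
  have hx : Real.Gamma x * Real.Gamma (1 - x) ≠ 0 :=
    (mul_pos (Real.Gamma_pos_of_pos hx₀) (Real.Gamma_pos_of_pos (sub_pos.mpr hx₁))).ne'
  rw [gammaRatio, gammaRatio, smul_mul_smul_comm, h, ← Real.Gamma_mul_Gamma_one_sub, ← mul_inv,
    Algebra.algebraMap_eq_smul_one, inv_smul_smul₀ hx]

theorem gammaRatio_eq_mul_half (hx : 0 < x)
    (h : √Real.pi • f x = (2 : ℝ) ^ (x - 1) • (f (x / 2) * f (x / 2 + 1 / 2))) :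
    gammaRatio f x = gammaRatio f (x / 2) * gammaRatio f (x / 2 + 1 / 2) := by
  have hΓ : Real.Gamma x ≠ 0 := (Real.Gamma_pos_of_pos hx).ne'
  have hπ : √Real.pi ≠ 0 := (Real.sqrt_pos.mpr Real.pi_pos).ne'
  have hdupΓ : Real.Gamma (x / 2) * Real.Gamma (x / 2 + 1 / 2) =
      Real.Gamma x * ((2 : ℝ) ^ (x - 1))⁻¹ * √Real.pi := by
    rw [Real.Gamma_mul_Gamma_add_half, mul_div_cancel₀ x two_ne_zero,
      ← Real.rpow_neg zero_le_two, neg_sub]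
  calc gammaRatio f x = ((Real.Gamma x)⁻¹ * (√Real.pi)⁻¹) • (√Real.pi • f x) := by
        rw [gammaRatio, smul_smul, inv_mul_cancel_right₀ hπ]
    _ = (Real.Gamma (x / 2) * Real.Gamma (x / 2 + 1 / 2))⁻¹ •
          (f (x / 2) * f (x / 2 + 1 / 2)) := by
        rw [h, smul_smul, hdupΓ]
        congr 1
        field_simp
    _ = gammaRatio f (x / 2) * gammaRatio f (x / 2 + 1 / 2) := by
        rw [gammaRatio, gammaRatio, smul_mul_smul_comm, mul_inv]

end GammaRatio

theorem fundamental_set_quarter_general {A : Type*} [Ring A] [Algebra ℝ A] (f : ℝ → A)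
    (hrec : ∀ x : ℝ, 0 < x → f (x + 1) = x • f x)
    (hdup : ∀ x : ℝ, 0 < x →
      √Real.pi • f x = (2 : ℝ) ^ (x - 1) • (f (x / 2) * f (x / 2 + 1 / 2)))
    (hrefl : ∀ x : ℝ, 0 < x → x < 1 →
      f x * f (1 - x) = algebraMap ℝ A (Real.pi / Real.sin (Real.pi * x)))
    (hagree : ∀ x ∈ Ioc (0 : ℝ) (1 / 4) ∪ {1 / 3, 1}, f x = algebraMap ℝ A (Real.Gamma x)) :
    ∀ x : ℝ, 0 < x → f x = algebraMap ℝ A (Real.Gamma x) := by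
  intro x hx
  rw [← gammaRatio_eq_one_iff hx]
  obtain ⟨y, hy, hxy⟩ := exists_mem_Ioc_zero_one_eq_of_add_one
    (fun y hy ↦ gammaRatio_add_one hy.ne' (hrec y hy)) hx
  rw [hxy]
  exact GammaMultiplier.eq_one_of_mem_Ioc_zero_one
    (fun z hz₀ hz₁ ↦ gammaRatio_mul_gammaRatio_one_sub hz₀ hz₁ (hrefl z hz₀ hz₁))
    (fun z hz ↦ gammaRatio_eq_mul_half hz (hdup z hz))
    (fun z hz ↦ (gammaRatio_eq_one_iff hz.1).mpr (hagree z (.inl hz)))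
    ((gammaRatio_eq_one_iff (by norm_num)).mpr (hagree _ (by simp)))
    ((gammaRatio_eq_one_iff one_pos).mpr (hagree _ (by simp))) hy

/-- The set `(0, 1/4] ∪ {1/3, 1}` is a fundamental set for the Gamma function: if
`f : (0,∞) → ℝ` satisfies the gamma functional identities (recurrence, duplication,
reflection) and agrees with `Γ` on `(0, 1/4] ∪ {1/3, 1}`, then `f = Γ` on `(0, ∞)`. -/
theorem fundamental_set_quarter (f : ℝ → ℝ)
    (hrec : ∀ x : ℝ, 0 < x → f (x + 1) = x * f x)
    (hdup : ∀ x : ℝ, 0 < x →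
      Real.sqrt Real.pi * f x = (2 : ℝ) ^ (x - 1) * f (x / 2) * f (x / 2 + 1 / 2))
    (hrefl : ∀ x : ℝ, 0 < x → x < 1 → f x * f (1 - x) = Real.pi / Real.sin (Real.pi * x))
    (hagree : ∀ x ∈ Set.Ioc (0 : ℝ) (1 / 4) ∪ ({1 / 3, 1} : Set ℝ), f x = Real.Gamma x) :
    ∀ x : ℝ, 0 < x → f x = Real.Gamma x := by
  simp only [mul_assoc] at hdup
  exact fundamental_set_quarter_general f hrec hdup hrefl hagree
end

section
/- The set (0, 1/3] ∪ {1} is a fundamental set for the Gamma function: if f : (0,∞) → ℝ satisfies the gamma functional identities and f(x) = Γ(x) for every x ∈ (0, 1/3] ∪ {1}, then f(x) = Γ(x) for every x > 0. -/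
/-! If `f` and `g` both satisfy the gamma functional identities, reflection carries agreement on
`(0, 1/3]` over to `[2/3, 1)`. For `x ∈ [1/3, 1/2]` the two arguments on the right of the
duplication formula lie in `[1/6, 1/4]` and `[2/3, 3/4]`, where agreement is now known, and a
second reflection covers `[1/2, 2/3]`. The point `1`, which these steps never reach, is prescribed,
and the recurrence does the rest. -/

open Set

theorem eqOn_Ioi_zero_of_eqOn_Ioc_of_add_one {α : Type*} {f g : ℝ → α} {φ : ℝ → α → α}
    (hf : ∀ x, 0 < x → f (x + 1) = φ x (f x)) (hg : ∀ x, 0 < x → g (x + 1) = φ x (g x))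
    (h : EqOn f g (Ioc 0 1)) : EqOn f g (Ioi 0) := by
  have eqOn_Ioc (n : ℕ) : EqOn f g (Ioc 0 (n + 1)) := by
    induction n with
    | zero => simpa using h
    | succ n ih =>
      rintro x ⟨hx, hxn⟩
      rcases le_or_gt x 1 with hx1 | hx1
      · exact h ⟨hx, hx1⟩
      · have hpos : 0 < x - 1 := sub_pos.mpr hx1
        have hprev : f (x - 1) = g (x - 1) := ih ⟨hpos, by push_cast at hxn; linarith⟩
        calc f x = φ (x - 1) (f (x - 1)) := by rw [← hf _ hpos, sub_add_cancel]
          _ = φ (x - 1) (g (x - 1)) := by rw [hprev]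
          _ = g x := by rw [← hg _ hpos, sub_add_cancel]
  intro x hx
  obtain ⟨n, hn⟩ := exists_nat_ge x
  exact eqOn_Ioc n ⟨hx, by linarith⟩

/-- The gamma functional identities: recurrence, Legendre duplication and Euler reflection.
A function on `(0, ∞)` is encoded as a function on `ℝ` whose values at `x ≤ 0` are
unconstrained. -/
structure GammaFunctionalIdentities (f : ℝ → ℝ) : Prop where
  add_one : ∀ x : ℝ, 0 < x → f (x + 1) = x * f x
  duplication : ∀ x : ℝ, 0 < x →
    Real.sqrt Real.pi * f x = (2 : ℝ) ^ (x - 1) * f (x / 2) * f (x / 2 + 1 / 2)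
  reflection : ∀ x : ℝ, 0 < x → x < 1 → f x * f (1 - x) = Real.pi / Real.sin (Real.pi * x)

theorem gammaFunctionalIdentities_Gamma : GammaFunctionalIdentities Real.Gamma where
  add_one _ hx := Real.Gamma_add_one hx.ne'
  duplication x _ := by
    have two_rpow_mul : (2 : ℝ) ^ (x - 1) * 2 ^ (1 - x) = 1 := by
      rw [← Real.rpow_add two_pos, sub_add_sub_cancel, sub_self, Real.rpow_zero]
    rw [mul_assoc, Real.Gamma_mul_Gamma_add_half, mul_div_cancel₀ x two_ne_zero]
    linear_combination -(Real.Gamma x * Real.sqrt Real.pi) * two_rpow_mul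
  reflection x _ _ := Real.Gamma_mul_Gamma_one_sub x

namespace GammaFunctionalIdentities

variable {f g : ℝ → ℝ} {x : ℝ}

theorem ne_zero (hf : GammaFunctionalIdentities f) (hx : x ∈ Ioo 0 1) : f x ≠ 0 := by
  have sin_pos : 0 < Real.sin (Real.pi * x) :=
    Real.sin_pos_of_pos_of_lt_pi (mul_pos Real.pi_pos hx.1)
      (mul_lt_of_lt_one_right Real.pi_pos hx.2)
  refine left_ne_zero_of_mul (b := f (1 - x)) ?_
  rw [hf.reflection x hx.1 hx.2]
  exact (div_pos Real.pi_pos sin_pos).ne'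

theorem eq_of_eq_one_sub (hf : GammaFunctionalIdentities f) (hg : GammaFunctionalIdentities g)
    (hx : x ∈ Ioo 0 1) (h : f (1 - x) = g (1 - x)) : f x = g x := by
  have hx' : 1 - x ∈ Ioo (0 : ℝ) 1 := ⟨sub_pos.mpr hx.2, sub_lt_self 1 hx.1⟩
  refine mul_right_cancel₀ (hg.ne_zero hx') ?_
  calc f x * g (1 - x) = f x * f (1 - x) := by rw [h]
    _ = g x * g (1 - x) := by rw [hf.reflection x hx.1 hx.2, hg.reflection x hx.1 hx.2]

theorem eq_of_eq_half (hf : GammaFunctionalIdentities f) (hg : GammaFunctionalIdentities g)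
    (hx : 0 < x) (h : f (x / 2) = g (x / 2)) (h' : f (x / 2 + 1 / 2) = g (x / 2 + 1 / 2)) :
    f x = g x := by
  refine mul_left_cancel₀ (Real.sqrt_pos.mpr Real.pi_pos).ne' ?_
  rw [hf.duplication x hx, hg.duplication x hx, h, h']

theorem eqOn_Ioo_of_eqOn_Ioc (hf : GammaFunctionalIdentities f)
    (hg : GammaFunctionalIdentities g) (h : EqOn f g (Ioc 0 (1 / 3))) :
    EqOn f g (Ioo 0 1) := by
  have eqOn_upper : EqOn f g (Ico (2 / 3) 1) := fun x ⟨hx, hx1⟩ ↦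
    hf.eq_of_eq_one_sub hg ⟨by linarith, hx1⟩ (h ⟨by linarith, by linarith⟩)
  have eqOn_middle : EqOn f g (Icc (1 / 3) (1 / 2)) := fun x ⟨hx, hx2⟩ ↦
    hf.eq_of_eq_half hg (by linarith) (h ⟨by linarith, by linarith⟩)
      (eqOn_upper ⟨by linarith, by linarith⟩)
  have eqOn_lower_half : EqOn f g (Ioc 0 (1 / 2)) := fun x ⟨hx, hx2⟩ ↦
    (le_total x (1 / 3)).elim (fun hx3 ↦ h ⟨hx, hx3⟩) fun hx3 ↦ eqOn_middle ⟨hx3, hx2⟩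
  rintro x ⟨hx, hx1⟩
  rcases le_total x (1 / 2) with hx2 | hx2
  · exact eqOn_lower_half ⟨hx, hx2⟩
  · exact hf.eq_of_eq_one_sub hg ⟨hx, hx1⟩ (eqOn_lower_half ⟨by linarith, by linarith⟩)

end GammaFunctionalIdentities

theorem fundamental_set_third_general {f g : ℝ → ℝ} (hf : GammaFunctionalIdentities f)
    (hg : GammaFunctionalIdentities g) (h : EqOn f g (Ioc 0 (1 / 3) ∪ {1})) :
    EqOn f g (Ioi 0) := by
  refine eqOn_Ioi_zero_of_eqOn_Ioc_of_add_one (φ := (· * ·)) hf.add_one hg.add_one ?_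
  rw [← Ioo_union_right zero_lt_one]
  exact (hf.eqOn_Ioo_of_eqOn_Ioc hg (h.mono subset_union_left)).union (h.mono subset_union_right)

/-- The set `(0, 1/3] ∪ {1}` is a fundamental set for the Gamma function: if
`f : (0,∞) → ℝ` satisfies the gamma functional identities (recurrence, duplication,
reflection) and agrees with `Γ` on `(0, 1/3] ∪ {1}`, then `f = Γ` on `(0, ∞)`. -/
theorem fundamental_set_third (f : ℝ → ℝ)
    (hrec : ∀ x : ℝ, 0 < x → f (x + 1) = x * f x)
    (hdup : ∀ x : ℝ, 0 < x →
      Real.sqrt Real.pi * f x = (2 : ℝ) ^ (x - 1) * f (x / 2) * f (x / 2 + 1 / 2))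
    (hrefl : ∀ x : ℝ, 0 < x → x < 1 → f x * f (1 - x) = Real.pi / Real.sin (Real.pi * x))
    (hagree : ∀ x ∈ Set.Ioc (0 : ℝ) (1 / 3) ∪ ({1} : Set ℝ), f x = Real.Gamma x) :
    ∀ x : ℝ, 0 < x → f x = Real.Gamma x :=
  fundamental_set_third_general ⟨hrec, hdup, hrefl⟩ gammaFunctionalIdentities_Gamma hagree
end

section
/- Landau's lemma: let δ ∈ (0,1] and let 0 ≤ α < β ≤ 1. Then there exists a non-negative integer m such that, setting I = (α/2^m, β/2^m] and J_i = (α/2^i + 1/2, β/2^i + 1/2] for 1 ≤ i ≤ m, one has: (i) I ⊆ (0, δ/2] and J_i ⊆ (δ/2, 1] for each i; (ii) the lengths satisfy |I| + Σ_{i=1}^m |J_i| = β − α and |I| > (δ/4)(β − α); and (iii) any function f : (0,∞) → ℝ satisfying √π·f(x) = 2^{x−1}·f(x/2)·f(x/2+1/2) for all x > 0 and agreeing with Γ on I ∪ J_1 ∪ ⋯ ∪ J_m agrees with Γ on (α, β]. -/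
/-!
By Legendre's formula `Γ` itself satisfies the duplication identity, which determines the value at
`x` from the values at `x / 2` and `x / 2 + 1 / 2`. Halving the first argument repeatedly, the value
at `x` is determined by those at `x / 2 ^ m` and at `x / 2 ^ i + 1 / 2` for `1 ≤ i ≤ m`. Each
halving splits an interval into two of half its length, so the total length is preserved, and the
`m` with `1 / 2 ^ m ≤ δ / 2 < 2 / 2 ^ m` satisfies both size requirements on `I`.
-/

theorem div_two_pow_add_sum_div_two_pow {K : Type*} [Field K] [NeZero (2 : K)] (c : K) (m : ℕ) :
    c / 2 ^ m + ∑ i ∈ Finset.Icc 1 m, c / 2 ^ i = c := by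
  induction m with
  | zero => simp
  | succ m ih =>
    have hhalves : c / 2 ^ (m + 1) + c / 2 ^ (m + 1) = c / 2 ^ m := by
      rw [pow_succ, ← div_div, add_halves]
    rw [Finset.sum_Icc_succ_top (Nat.le_add_left 1 m), add_comm (∑ i ∈ _, _), ← add_assoc,
      hhalves, ih]

section Dyadic

variable {K : Type*} [Field K] [LinearOrder K] [IsStrictOrderedRing K]

theorem exists_inv_pow_le_lt_mul_inv_pow [Archimedean K] {b x : K} (hb : 1 < b) (hx₀ : 0 < x)
    (hx₁ : x ≤ 1) : ∃ n : ℕ, (b ^ n)⁻¹ ≤ x ∧ x < b * (b ^ n)⁻¹ := by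
  obtain ⟨k, hle, hlt⟩ := exists_mem_Ico_zpow hx₀ hb
  have hk : k ≤ 0 := (zpow_le_one_iff_right₀ hb).1 (hle.trans hx₁)
  obtain ⟨n, rfl⟩ := Int.exists_eq_neg_ofNat hk
  rw [zpow_add_one₀ (zero_lt_one.trans hb).ne', mul_comm] at hlt
  rw [zpow_neg, zpow_natCast] at hle hlt
  exact ⟨n, hle, hlt⟩

theorem Ioc_div_subset_Ioc_zero {α β c ε : K} (hα : 0 ≤ α) (hβ : β ≤ 1) (hc : 0 < c)
    (hε : c⁻¹ ≤ ε) : Set.Ioc (α / c) (β / c) ⊆ Set.Ioc 0 ε := by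
  refine Set.Ioc_subset_Ioc (by positivity) ?_
  calc β / c ≤ 1 / c := by gcongr
    _ ≤ ε := by rwa [one_div]

theorem Ioc_div_add_half_subset_Ioc_half_one {α β c : K} (hα : 0 ≤ α) (hβ : β ≤ 1)
    (hc : 2 ≤ c) : Set.Ioc (α / c + 1 / 2) (β / c + 1 / 2) ⊆ Set.Ioc (1 / 2) 1 := by
  have hc₀ : 0 < c := two_pos.trans_le hc
  refine Set.Ioc_subset_Ioc (le_add_of_nonneg_left (div_nonneg hα hc₀.le)) ?_
  calc β / c + 1 / 2 ≤ 1 / 2 + 1 / 2 := by gcongr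
    _ = 1 := add_halves 1

theorem eq_of_halving_recurrence {R : Type*} {F : K → R → R → R} {f g : K → R}
    (hf : ∀ x, 0 < x → f x = F x (f (x / 2)) (f (x / 2 + 1 / 2)))
    (hg : ∀ x, 0 < x → g x = F x (g (x / 2)) (g (x / 2 + 1 / 2)))
    {x : K} (hx : 0 < x) (m : ℕ) (hI : f (x / 2 ^ m) = g (x / 2 ^ m))
    (hJ : ∀ i, 1 ≤ i → i ≤ m → f (x / 2 ^ i + 1 / 2) = g (x / 2 ^ i + 1 / 2)) :
    f x = g x := by
  induction m with
  | zero => simpa only [pow_zero, div_one] using hI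
  | succ m ih =>
    have hhalf : x / 2 ^ (m + 1) = x / 2 ^ m / 2 := by rw [pow_succ, div_div]
    have hJ_top := hJ (m + 1) (Nat.le_add_left 1 m) le_rfl
    rw [hhalf] at hI hJ_top
    have hpos : 0 < x / 2 ^ m := by positivity
    have hI_prev : f (x / 2 ^ m) = g (x / 2 ^ m) := by
      rw [hf _ hpos, hg _ hpos, hI, hJ_top]
    exact ih hI_prev fun i hi him => hJ i hi (Nat.le_succ_of_le him)

end Dyadic

theorem sqrt_pi_mul_Gamma (x : ℝ) :
    Real.sqrt Real.pi * Real.Gamma x =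
      2 ^ (x - 1) * Real.Gamma (x / 2) * Real.Gamma (x / 2 + 1 / 2) := by
  have hpow : (2 : ℝ) ^ (x - 1) * 2 ^ (1 - x) = 1 := by
    rw [← Real.rpow_add two_pos, sub_add_sub_cancel', sub_self, Real.rpow_zero]
  calc Real.sqrt Real.pi * Real.Gamma x
      = 2 ^ (x - 1) * 2 ^ (1 - x) * (Real.Gamma x * Real.sqrt Real.pi) := by
        rw [hpow, one_mul, mul_comm]
    _ = 2 ^ (x - 1) * (Real.Gamma (x / 2) * Real.Gamma (x / 2 + 1 / 2)) := by
        rw [Real.Gamma_mul_Gamma_add_half, mul_div_cancel₀ x two_ne_zero]; ring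
    _ = 2 ^ (x - 1) * Real.Gamma (x / 2) * Real.Gamma (x / 2 + 1 / 2) := (mul_assoc _ _ _).symm

theorem eq_Gamma_of_duplication {f : ℝ → ℝ}
    (hf : ∀ x : ℝ, 0 < x →
      Real.sqrt Real.pi * f x = 2 ^ (x - 1) * f (x / 2) * f (x / 2 + 1 / 2))
    {x : ℝ} (hx : 0 < x) (m : ℕ) (hI : f (x / 2 ^ m) = Real.Gamma (x / 2 ^ m))
    (hJ : ∀ i, 1 ≤ i → i ≤ m → f (x / 2 ^ i + 1 / 2) = Real.Gamma (x / 2 ^ i + 1 / 2)) :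
    f x = Real.Gamma x := by
  have hsqrt : Real.sqrt Real.pi ≠ 0 := (Real.sqrt_pos.2 Real.pi_pos).ne'
  exact eq_of_halving_recurrence (F := fun x a b => 2 ^ (x - 1) * a * b / Real.sqrt Real.pi)
    (fun y hy => eq_div_of_mul_eq hsqrt ((mul_comm _ _).trans (hf y hy)))
    (fun y _ => eq_div_of_mul_eq hsqrt ((mul_comm _ _).trans (sqrt_pi_mul_Gamma y))) hx m hI hJ

/-- Landau's lemma: for `δ ∈ (0,1]` and `0 ≤ α < β ≤ 1`, there is `m : ℕ` such that,
with `I = (α/2^m, β/2^m]` and `Jᵢ = (α/2^i + 1/2, β/2^i + 1/2]` for `1 ≤ i ≤ m`: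
`I ⊆ (0, δ/2]`, each `Jᵢ ⊆ (δ/2, 1]`, the lengths satisfy
`|I| + Σ |Jᵢ| = β − α` and `|I| > (δ/4)(β − α)`, and any `f` satisfying the duplication
identity which agrees with `Γ` on `I ∪ J₁ ∪ ⋯ ∪ J_m` agrees with `Γ` on `(α, β]`. -/
theorem landau_lemma (δ α β : ℝ) (hδ₀ : 0 < δ) (hδ₁ : δ ≤ 1)
    (hα : 0 ≤ α) (hαβ : α < β) (hβ : β ≤ 1) :
    ∃ m : ℕ,
      Set.Ioc (α / 2 ^ m) (β / 2 ^ m) ⊆ Set.Ioc 0 (δ / 2) ∧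
      (∀ i : ℕ, 1 ≤ i → i ≤ m →
        Set.Ioc (α / 2 ^ i + 1 / 2) (β / 2 ^ i + 1 / 2) ⊆ Set.Ioc (δ / 2) 1) ∧
      ((β - α) / 2 ^ m + ∑ i ∈ Finset.Icc 1 m, (β - α) / 2 ^ i = β - α) ∧
      (δ / 4 * (β - α) < (β - α) / 2 ^ m) ∧
      ∀ f : ℝ → ℝ,
        (∀ x : ℝ, 0 < x →
          Real.sqrt Real.pi * f x = (2 : ℝ) ^ (x - 1) * f (x / 2) * f (x / 2 + 1 / 2)) →
        (∀ x : ℝ, (x ∈ Set.Ioc (α / 2 ^ m) (β / 2 ^ m) ∨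
            ∃ i : ℕ, 1 ≤ i ∧ i ≤ m ∧ x ∈ Set.Ioc (α / 2 ^ i + 1 / 2) (β / 2 ^ i + 1 / 2)) →
          f x = Real.Gamma x) →
        ∀ x ∈ Set.Ioc α β, f x = Real.Gamma x := by
  obtain ⟨m, hm_le, hm_lt⟩ :=
    exists_inv_pow_le_lt_mul_inv_pow one_lt_two (half_pos hδ₀) (by linarith : δ / 2 ≤ 1)
  refine ⟨m, Ioc_div_subset_Ioc_zero hα hβ (by positivity) hm_le, fun i hi _ => ?_,
    div_two_pow_add_sum_div_two_pow _ m, ?_, fun f hf hΓ x hx => ?_⟩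
  · have hδ_half : δ / 2 ≤ 1 / 2 := by linarith
    have htwo : (2 : ℝ) ≤ 2 ^ i := le_self_pow₀ one_le_two (Nat.one_le_iff_ne_zero.1 hi)
    exact (Ioc_div_add_half_subset_Ioc_half_one hα hβ htwo).trans
      (Set.Ioc_subset_Ioc_left hδ_half)
  · have hquarter : δ / 4 < (2 ^ m)⁻¹ := by linarith
    exact (mul_lt_mul_of_pos_right hquarter (sub_pos.2 hαβ)).trans_eq (inv_mul_eq_div _ _)
  · have hscale (i : ℕ) : x / 2 ^ i ∈ Set.Ioc (α / 2 ^ i) (β / 2 ^ i) :=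
      ⟨div_lt_div_of_pos_right hx.1 (by positivity),
        div_le_div_of_nonneg_right hx.2 (by positivity)⟩
    exact eq_Gamma_of_duplication hf (hα.trans_lt hx.1) m (hΓ _ (Or.inl (hscale m)))
      fun i hi him => hΓ _ (Or.inr ⟨i, hi, him, add_lt_add_left (hscale i).1 _,
        add_le_add_left (hscale i).2 _⟩)
end

section
/- Complex analogue of Landau's theorem: let D = ℂ ∖ {0, −1, −2, …}. For every δ > 0 there exists a Lebesgue-measurable set S ⊆ D with two-dimensional Lebesgue measure less than δ such that any function f : ℂ → ℂ satisfying f(z+1) = z·f(z) for all z ∈ D with z+1 ∈ D, √π·f(z) = 2^{z−1}·f(z/2)·f(z/2+1/2) for all z with Re z > 0, and f(z)·f(1−z) = π/sin(πz) for all z ∉ ℤ, and agreeing with Γ on S, must agree with Γ on all of D. -/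
open MeasureTheory

/-! The duplication formula determines `f` on the line `Im z = y` by its values on the line
`Im z = y / 2`, and the recurrence determines `f` on a whole line by its values on a segment of
length one in the right half-plane. Halving finitely many times brings every line into a given
neighbourhood of the real axis, so an arbitrarily thin box of width one suffices. -/

open Set Topology

/-- The natural domain `D = ℂ ∖ {0, -1, -2, …}` of the Gamma function. -/
def gammaDomain : Set ℂ := {z | ∀ n : ℕ, z ≠ -(n : ℂ)}

/-- The two functional equations of `Γ` that propagate values: the recurrence on the domain of `Γ`
and Legendre's duplication formula on the right half-plane. -/
structure IsGammaLike (f : ℂ → ℂ) : Prop where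
  apply_add_one : ∀ z ∈ gammaDomain, f (z + 1) = z * f z
  duplication : ∀ z : ℂ, 0 < z.re →
    (Real.sqrt Real.pi : ℂ) * f z = (2 : ℂ) ^ (z - 1) * f (z / 2) * f (z / 2 + 1 / 2)

lemma volume_reProdIm (s t : Set ℝ) : volume (s ×ℂ t) = volume s * volume t := by
  have h := Complex.volume_preserving_equiv_real_prod.measure_preimage_equiv (s ×ˢ t)
  rwa [Measure.volume_eq_prod, Measure.prod_prod] at h

lemma ne_zero_of_mem_gammaDomain {z : ℂ} (hz : z ∈ gammaDomain) : z ≠ 0 := by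
  simpa using hz 0

lemma mem_gammaDomain_of_re_pos {z : ℂ} (hz : 0 < z.re) : z ∈ gammaDomain := by
  rintro n rfl
  have hn : (n : ℝ) < 0 := by simpa using hz
  exact hn.not_ge n.cast_nonneg

lemma add_natCast_mem_gammaDomain {z : ℂ} (hz : z ∈ gammaDomain) (n : ℕ) :
    z + n ∈ gammaDomain := by
  intro k hk
  refine hz (k + n) ?_
  push_cast
  linear_combination hk

lemma isGammaLike_Gamma : IsGammaLike Complex.Gamma where
  apply_add_one z hz := Complex.Gamma_add_one z (ne_zero_of_mem_gammaDomain hz)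
  duplication z _ := by
    have h_pow : (2 : ℂ) ^ (z - 1) * (2 : ℂ) ^ (1 - z) = 1 := by
      rw [← Complex.cpow_add _ _ two_ne_zero, sub_add_sub_cancel', sub_self, Complex.cpow_zero]
    rw [mul_assoc, Complex.Gamma_mul_Gamma_add_half, mul_div_cancel₀ z two_ne_zero]
    linear_combination -(Complex.Gamma z * (Real.sqrt Real.pi : ℂ)) * h_pow

namespace IsGammaLike

variable {f g : ℂ → ℂ} (hf : IsGammaLike f) (hg : IsGammaLike g)
include hf hg

lemma apply_add_natCast_eq_iff {z : ℂ} (hz : z ∈ gammaDomain) (n : ℕ) :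
    f (z + n) = g (z + n) ↔ f z = g z := by
  induction n with
  | zero => simp
  | succ n ih =>
    have hzn := add_natCast_mem_gammaDomain hz n
    rw [Nat.cast_succ, ← add_assoc, hf.apply_add_one _ hzn, hg.apply_add_one _ hzn,
      mul_right_inj' (ne_zero_of_mem_gammaDomain hzn), ih]

lemma eqOn_line_of_eqOn_segment {a y : ℝ} (ha : 0 < a) (h : EqOn f g (Ico a (a + 1) ×ℂ {y})) :
    EqOn f g {z ∈ gammaDomain | z.im = y} := by
  rintro z ⟨hz, rfl⟩
  obtain ⟨m, hm, -⟩ := existsUnique_add_zsmul_mem_Ico one_pos z.re a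
  have hw : f (z + m) = g (z + m) := h (by simpa [Complex.mem_reProdIm] using hm)
  obtain ⟨n, rfl | rfl⟩ := m.eq_nat_or_neg
  · rw [Int.cast_natCast] at hw
    exact (hf.apply_add_natCast_eq_iff hg hz n).1 hw
  · have hwD : z + ((-n : ℤ) : ℂ) ∈ gammaDomain :=
      mem_gammaDomain_of_re_pos (ha.trans_le (by simpa using hm.1))
    simpa using (hf.apply_add_natCast_eq_iff hg hwD n).2 hw

lemma eqOn_line_of_eqOn_line_half {y : ℝ} (h : EqOn f g {z ∈ gammaDomain | z.im = y / 2}) :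
    EqOn f g {z ∈ gammaDomain | z.im = y} := by
  refine hf.eqOn_line_of_eqOn_segment hg one_pos fun z hz ↦ ?_
  obtain ⟨⟨hz_one, -⟩, rfl⟩ := Complex.mem_reProdIm.1 hz
  have hz_pos : 0 < z.re := one_pos.trans_le hz_one
  have h_left : f (z / 2) = g (z / 2) :=
    h ⟨mem_gammaDomain_of_re_pos (by simpa using hz_pos), by simp⟩
  have h_right_pos : 0 < (z / 2 + 1 / 2).re := by
    rw [← add_div, Complex.div_ofNat_re, Complex.add_re, Complex.one_re]
    positivity
  have h_right : f (z / 2 + 1 / 2) = g (z / 2 + 1 / 2) :=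
    h ⟨mem_gammaDomain_of_re_pos h_right_pos, by simp⟩
  have h_sqrt_pi : (Real.sqrt Real.pi : ℂ) ≠ 0 := by
    exact_mod_cast (Real.sqrt_pos.2 Real.pi_pos).ne'
  refine mul_left_cancel₀ h_sqrt_pi ?_
  rw [hf.duplication z hz_pos, hg.duplication z hz_pos, h_left, h_right]

lemma eqOn_line_of_eqOn_line_div_two_pow {y : ℝ} (n : ℕ)
    (h : EqOn f g {z ∈ gammaDomain | z.im = y / 2 ^ n}) :
    EqOn f g {z ∈ gammaDomain | z.im = y} := by
  induction n with
  | zero => simpa using h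
  | succ n ih =>
    rw [pow_succ, ← div_div] at h
    exact ih (hf.eqOn_line_of_eqOn_line_half hg h)

theorem eqOn_gammaDomain_of_eqOn_reProdIm {a : ℝ} {t : Set ℝ} (ha : 0 < a) (ht : t ∈ 𝓝 0)
    (h : EqOn f g (Ico a (a + 1) ×ℂ t)) : EqOn f g gammaDomain := by
  intro z hz
  have h_lim : Filter.Tendsto (fun n : ℕ ↦ z.im / 2 ^ n) Filter.atTop (𝓝 0) :=
    tendsto_const_nhds.div_atTop (tendsto_pow_atTop_atTop_of_one_lt one_lt_two)
  obtain ⟨n, hn⟩ := (h_lim.eventually_mem ht).exists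
  have h_segment : EqOn f g (Ico a (a + 1) ×ℂ {z.im / 2 ^ n}) :=
    h.mono (Complex.reProdIm_subset_iff.2 (prod_mono_right (singleton_subset_iff.2 hn)))
  have h_line := hf.eqOn_line_of_eqOn_segment hg ha h_segment
  exact hf.eqOn_line_of_eqOn_line_div_two_pow hg n h_line ⟨hz, rfl⟩

end IsGammaLike

theorem landau_germinating_complex_general (δ : ℝ) (hδ : 0 < δ) :
    ∃ S : Set ℂ, MeasurableSet S ∧ S ⊆ gammaDomain ∧ volume S < ENNReal.ofReal δ ∧
      ∀ f g : ℂ → ℂ, IsGammaLike f → IsGammaLike g → EqOn f g S → EqOn f g gammaDomain := by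
  refine ⟨Ico 1 (1 + 1) ×ℂ Ioo (-(δ / 4)) (δ / 4),
    (Complex.measurable_re measurableSet_Ico).inter (Complex.measurable_im measurableSet_Ioo),
    ?_, ?_, fun f g hf hg h ↦ ?_⟩
  · exact fun z hz ↦ mem_gammaDomain_of_re_pos (one_pos.trans_le hz.1.1)
  · rw [volume_reProdIm, Real.volume_Ico, Real.volume_Ioo, add_sub_cancel_left,
      ENNReal.ofReal_one, one_mul, ENNReal.ofReal_lt_ofReal_iff hδ]
    linarith
  · exact hf.eqOn_gammaDomain_of_eqOn_reProdIm hg one_pos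
      (Ioo_mem_nhds (by linarith) (by linarith)) h

/-- Complex analogue of Landau's theorem: with `D = ℂ ∖ {0, −1, −2, …}`, for every `δ > 0`
there is a measurable set `S ⊆ D` of two-dimensional Lebesgue measure less than `δ` such
that any `f : ℂ → ℂ` satisfying the recurrence on `D`, the duplication formula on the right
half-plane, and the reflection formula off the integers, which agrees with `Γ` on `S`,
agrees with `Γ` on all of `D`. -/
theorem landau_germinating_complex (δ : ℝ) (hδ : 0 < δ) :
    ∃ S : Set ℂ, MeasurableSet S ∧ S ⊆ {z : ℂ | ∀ n : ℕ, z ≠ -(n : ℂ)} ∧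
      volume S < ENNReal.ofReal δ ∧
      ∀ f : ℂ → ℂ,
        (∀ z : ℂ, (∀ n : ℕ, z ≠ -(n : ℂ)) → (∀ n : ℕ, z + 1 ≠ -(n : ℂ)) →
          f (z + 1) = z * f z) →
        (∀ z : ℂ, 0 < z.re →
          (Real.sqrt Real.pi : ℂ) * f z =
            (2 : ℂ) ^ (z - 1) * f (z / 2) * f (z / 2 + 1 / 2)) →
        (∀ z : ℂ, (∀ n : ℤ, z ≠ (n : ℂ)) →
          f z * f (1 - z) = (Real.pi : ℂ) / Complex.sin (Real.pi * z)) →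
        (∀ z ∈ S, f z = Complex.Gamma z) →
        ∀ z : ℂ, (∀ n : ℕ, z ≠ -(n : ℂ)) → f z = Complex.Gamma z := by
  obtain ⟨S, hS_meas, hS_sub, hS_vol, hS⟩ := landau_germinating_complex_general δ hδ
  refine ⟨S, hS_meas, hS_sub, hS_vol, fun f h_rec h_dup _ h_agree ↦ ?_⟩
  have h_add_one_mem {z : ℂ} (hz : z ∈ gammaDomain) : z + 1 ∈ gammaDomain := by
    simpa using add_natCast_mem_gammaDomain hz 1
  have hf : IsGammaLike f := ⟨fun z hz ↦ h_rec z hz (h_add_one_mem hz), h_dup⟩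
  exact hS f Complex.Gamma hf isGammaLike_Gamma h_agree
end

section
/- Schlömilch's additive analogue of the duplication formula: let m be a non-negative integer and let z ∈ ℂ with Re z > m. Then (2^{z−1}/√π) · Γ((z+m+1)/2) · Γ((z−m)/2) = Σ_{n=0}^{m} (Γ(z−n) / (2ⁿ · n!)) · (m−n+1)_{2n}. -/
/-! Put `L m z` for the left-hand side and `S m z = ∑ aₙ(m) Γ(z - n)` for the right-hand side,
where `aₙ(m) = (m - n + 1)₂ₙ / (2ⁿ n!)`. Both satisfy `F (m + 1) (z + 1) = (z + m + 1) F m z`: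
for `L` this is the functional equation of `Γ` in its first factor, and for `S` it is the recurrence
`aₙ₊₁(m + 1) = aₙ₊₁(m) + (m + n + 1) aₙ(m)` together with `Γ(z + 1 - n) = (z - n) Γ(z - n)`.
For `m = 0` the identity `L 0 z = Γ z = S 0 z` is Legendre's duplication formula. -/

open Finset

lemma ascPochhammer_succ_eval_left {R : Type*} [CommSemiring R] (k : ℕ) (x : R) :
    (ascPochhammer R (k + 1)).eval x = x * (ascPochhammer R k).eval (x + 1) := by
  simp [ascPochhammer_succ_left, Polynomial.eval_comp]

section BesselCoeff

variable {K : Type*} [Field K]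

/-- The coefficient `(x - n + 1)₂ₙ / (2ⁿ n!)` of `tⁿ` in the Bessel polynomial `yₓ(t)`, which for
`x = m ≥ n` in `ℕ` is `(m + n)! / (2ⁿ n! (m - n)!)`. The index `x` is taken in the field, so that
the coefficients with `n > m` need no truncated subtraction. -/
noncomputable def besselCoeff (x : K) (n : ℕ) : K :=
  (ascPochhammer K (2 * n)).eval (x - n + 1) / (2 ^ n * (n.factorial : K))

lemma besselCoeff_zero_right (x : K) : besselCoeff x 0 = 1 := by
  simp [besselCoeff]

lemma besselCoeff_natCast_succ_self (m : ℕ) : besselCoeff (m : K) (m + 1) = 0 := by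
  simp [besselCoeff]

lemma besselCoeff_add_one_succ [CharZero K] (x : K) (n : ℕ) :
    besselCoeff (x + 1) (n + 1) = besselCoeff x (n + 1) + (x + n + 1) * besselCoeff x n := by
  set p := (ascPochhammer K (2 * n)).eval (x - n + 1) with hp
  have pochhammer_append_two : (ascPochhammer K (2 * (n + 1))).eval (x - n + 1) =
      p * (x + n + 1) * (x + n + 2) := by
    rw [mul_add_one, ascPochhammer_succ_eval, ascPochhammer_succ_eval]
    push_cast
    ring
  have pochhammer_prepend_append : (ascPochhammer K (2 * (n + 1))).eval (x - n) =
      (x - n) * (p * (x + n + 1)) := by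
    rw [mul_add_one, ascPochhammer_succ_eval_left, ascPochhammer_succ_eval]
    push_cast
    ring
  have hn : (n : K) + 1 ≠ 0 := n.cast_add_one_ne_zero
  have hfac : (n.factorial : K) ≠ 0 := Nat.cast_ne_zero.mpr n.factorial_ne_zero
  have shift : x - ((n : K) + 1) + 1 = x - n := by ring
  simp only [besselCoeff, Nat.cast_add_one, Nat.factorial_succ, Nat.cast_mul, ← hp,
    add_sub_add_right_eq_sub, pochhammer_append_two, shift, pochhammer_prepend_append]
  field_simp
  ring

lemma sum_besselCoeff_succ_mul [CharZero K] (m : ℕ) (g : ℕ → K) :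
    ∑ n ∈ range (m + 2), besselCoeff ((m : K) + 1) n * g n =
      ∑ n ∈ range (m + 1), besselCoeff (m : K) n * (g n + (m + n + 1) * g (n + 1)) := by
  have extend : ∑ n ∈ range (m + 1), besselCoeff (m : K) n * g n =
      ∑ n ∈ range (m + 1), besselCoeff (m : K) (n + 1) * g (n + 1) + g 0 := by
    have last_term_zero := sum_range_succ (fun n ↦ besselCoeff (m : K) n * g n) (m + 1)
    rw [besselCoeff_natCast_succ_self, zero_mul, add_zero] at last_term_zero
    rw [← last_term_zero, sum_range_succ', besselCoeff_zero_right, one_mul]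
  calc ∑ n ∈ range (m + 2), besselCoeff ((m : K) + 1) n * g n
      = ∑ n ∈ range (m + 1), besselCoeff ((m : K) + 1) (n + 1) * g (n + 1) + g 0 := by
        rw [sum_range_succ', besselCoeff_zero_right, one_mul]
    _ = ∑ n ∈ range (m + 1), besselCoeff (m : K) n * g n +
          ∑ n ∈ range (m + 1), besselCoeff (m : K) n * ((m + n + 1) * g (n + 1)) := by
        rw [extend, add_right_comm, ← sum_add_distrib]
        congr 1
        refine sum_congr rfl fun n _ ↦ ?_
        rw [besselCoeff_add_one_succ]
        ring
    _ = _ := by simp only [mul_add, sum_add_distrib]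

end BesselCoeff

/-- The Gamma sum `∑ aₙ(m) Γ(z - n)` over `0 ≤ n ≤ m`, with `aₙ(m)` the coefficients of the Bessel
polynomial `yₘ`; for `Re z > m` it is the Mellin transform at `z` of `e⁻ᵗ yₘ(1 / t)`. -/
noncomputable def besselGammaSum (m : ℕ) (z : ℂ) : ℂ :=
  ∑ n ∈ range (m + 1), besselCoeff (m : ℂ) n * Complex.Gamma (z - n)

lemma besselGammaSum_zero (z : ℂ) : besselGammaSum 0 z = Complex.Gamma z := by
  simp [besselGammaSum, besselCoeff_zero_right]

lemma besselGammaSum_succ_add_one {m : ℕ} {z : ℂ} (hz : ∀ n ≤ m, z ≠ n) :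
    besselGammaSum (m + 1) (z + 1) = (z + m + 1) * besselGammaSum m z := by
  simp only [besselGammaSum, Nat.cast_add_one]
  rw [sum_besselCoeff_succ_mul, mul_sum]
  refine sum_congr rfl fun n hn ↦ ?_
  have hzn : z - n ≠ 0 := sub_ne_zero.mpr (hz n (mem_range_succ_iff.mp hn))
  have gamma_step : Complex.Gamma (z + 1 - n) = (z - n) * Complex.Gamma (z - n) := by
    rw [← Complex.Gamma_add_one _ hzn, sub_add_eq_add_sub]
  rw [gamma_step, Nat.cast_add_one, add_sub_add_right_eq_sub]
  ring

/-- The product `2^(z - 1) / √π · Γ((z + w + 1) / 2) · Γ((z - w) / 2)`, i.e. the left-hand side of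
Schlömilch's formula with the integer `m` replaced by a complex parameter `w`. -/
noncomputable def halfGammaProduct (w z : ℂ) : ℂ :=
  (2 : ℂ) ^ (z - 1) / (Real.sqrt Real.pi : ℂ) *
    Complex.Gamma ((z + w + 1) / 2) * Complex.Gamma ((z - w) / 2)

lemma halfGammaProduct_zero (z : ℂ) : halfGammaProduct 0 z = Complex.Gamma z := by
  have hpi : (Real.sqrt Real.pi : ℂ) ≠ 0 :=
    Complex.ofReal_ne_zero.mpr (Real.sqrt_pos.mpr Real.pi_pos).ne'
  have duplication : Complex.Gamma (z / 2) * Complex.Gamma ((z + 1) / 2) =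
      Complex.Gamma z * (2 : ℂ) ^ (1 - z) * (Real.sqrt Real.pi : ℂ) := by
    simpa only [← add_div, mul_div_cancel₀ z (two_ne_zero (α := ℂ))] using
      Complex.Gamma_mul_Gamma_add_half (z / 2)
  have cpow_cancel : (2 : ℂ) ^ (z - 1) * (2 : ℂ) ^ (1 - z) = 1 := by
    rw [← Complex.cpow_add _ _ two_ne_zero, sub_add_sub_cancel, sub_self, Complex.cpow_zero]
  calc halfGammaProduct 0 z
      = (2 : ℂ) ^ (z - 1) / (Real.sqrt Real.pi : ℂ) *
          (Complex.Gamma (z / 2) * Complex.Gamma ((z + 1) / 2)) := by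
        rw [halfGammaProduct, add_zero, sub_zero]
        ring
    _ = (2 : ℂ) ^ (z - 1) * (2 : ℂ) ^ (1 - z) * Complex.Gamma z := by
        rw [duplication]
        field_simp
    _ = Complex.Gamma z := by rw [cpow_cancel, one_mul]

lemma halfGammaProduct_add_one_add_one {w z : ℂ} (h : z + w + 1 ≠ 0) :
    halfGammaProduct (w + 1) (z + 1) = (z + w + 1) * halfGammaProduct w z := by
  have gamma_step : Complex.Gamma ((z + 1 + (w + 1) + 1) / 2) =
      (z + w + 1) / 2 * Complex.Gamma ((z + w + 1) / 2) := by
    rw [← Complex.Gamma_add_one _ (div_ne_zero h two_ne_zero)]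
    congr 1
    ring
  have cpow_step : (2 : ℂ) ^ (z + 1 - 1) = 2 ^ (z - 1) * 2 := by
    rw [add_sub_right_comm, Complex.cpow_add _ _ two_ne_zero, Complex.cpow_one]
  rw [halfGammaProduct, halfGammaProduct, gamma_step, cpow_step, add_sub_add_right_eq_sub]
  ring

theorem halfGammaProduct_eq_besselGammaSum (m : ℕ) (z : ℂ) (hz : ∀ k : ℕ, z - m ≠ -k) :
    halfGammaProduct m z = besselGammaSum m z := by
  induction m generalizing z with
  | zero => rw [Nat.cast_zero, halfGammaProduct_zero, besselGammaSum_zero]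
  | succ m ih =>
    obtain ⟨z, rfl⟩ : ∃ y, z = y + 1 := ⟨z - 1, (sub_add_cancel z 1).symm⟩
    simp only [Nat.cast_add_one, add_sub_add_right_eq_sub] at hz ⊢
    have hadd : z + m + 1 ≠ 0 := fun h ↦ hz (2 * m + 1) <| by
      push_cast
      linear_combination h
    have hne : ∀ n ≤ m, z ≠ n := fun n hn h ↦ hz (m - n) <| by
      rw [h, Nat.cast_sub hn, neg_sub]
    rw [halfGammaProduct_add_one_add_one hadd, besselGammaSum_succ_add_one hne, ih z hz]

theorem schlomilch_general (m : ℕ) (z : ℂ) (hz : ∀ k : ℕ, z - m ≠ -k) :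
    (2 : ℂ) ^ (z - 1) / (Real.sqrt Real.pi : ℂ) *
        Complex.Gamma ((z + m + 1) / 2) * Complex.Gamma ((z - m) / 2) =
      ∑ n ∈ Finset.range (m + 1),
        Complex.Gamma (z - n) / (2 ^ n * (n.factorial : ℂ)) *
          (ascPochhammer ℂ (2 * n)).eval ((m : ℂ) - n + 1) := by
  calc _ = besselGammaSum m z := halfGammaProduct_eq_besselGammaSum m z hz
    _ = _ := sum_congr rfl fun n _ ↦ by rw [besselCoeff]; ring

/-- Schlömilch's additive analogue of the duplication formula: for a non-negative integer
`m` and `z ∈ ℂ` with `Re z > m`,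
`(2^{z−1}/√π) · Γ((z+m+1)/2) · Γ((z−m)/2) = Σ_{n=0}^{m} (Γ(z−n)/(2ⁿ·n!)) · (m−n+1)_{2n}`. -/
theorem schlomilch (m : ℕ) (z : ℂ) (hz : (m : ℝ) < z.re) :
    (2 : ℂ) ^ (z - 1) / (Real.sqrt Real.pi : ℂ) *
        Complex.Gamma ((z + m + 1) / 2) * Complex.Gamma ((z - m) / 2) =
      ∑ n ∈ Finset.range (m + 1),
        Complex.Gamma (z - n) / (2 ^ n * (n.factorial : ℂ)) *
          (ascPochhammer ℂ (2 * n)).eval ((m : ℂ) - n + 1) := by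
  refine schlomilch_general m z fun k h ↦ ?_
  have hre : z.re - m = -k := by simpa using congrArg Complex.re h
  linarith [k.cast_nonneg (α := ℝ)]
end

section
/- For all non-negative integers m and l, the binomial coefficient identity C(m+l, m) = Σ_{n=0}^{m} 2^{−(m+n)} · C(m+n, m) · C(2l+m−n, 2l) holds. -/
/-!
Put `r = -(l + 1)`. Up to sign, the sum is the coefficient of `X ^ m` in
`2 (1 + X) ^ (2r + 1) / (2 + X) ^ (m + 1)`. Since `u = (1 + X) ^ 2 - 1 = X (2 + X)` has
`du = 2 (1 + X) dX`, this coefficient is the residue of `(1 + u) ^ r du / u ^ (m + 1)`, that is, the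
coefficient of `u ^ m` in `(1 + u) ^ r`.
-/

section FormalResidue

open PowerSeries

variable {R : Type*} [CommRing R]

lemma derivative_eq_neg_sq_mul_of_mul_eq_one {v w : R⟦X⟧} (h : v * w = 1) :
    d⁄dX R v = -v ^ 2 * d⁄dX R w := by
  let : Invertible w := ⟨v, h, by rw [mul_comm, h]⟩
  exact derivative_invOf w

-- For `u = X * w`, the form `du / u ^ (m + 2)` has no residue, because `m + 1` times it is the
-- differential of `-1 / u ^ (m + 1)`.
lemma coeff_succ_derivative_X_mul_mul_pow [IsAddTorsionFree R] {v w : R⟦X⟧} (h : v * w = 1)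
    (m : ℕ) : coeff (m + 1) (d⁄dX R (X * w) * v ^ (m + 2)) = 0 := by
  have euler : (m + 1) • (d⁄dX R (X * w) * v ^ (m + 2)) =
      (m + 1) • v ^ (m + 1) - X * d⁄dX R (v ^ (m + 1)) := by
    rw [derivative_pow, derivative_eq_neg_sq_mul_of_mul_eq_one h]
    simp only [Derivation.leibniz, derivative_X, smul_eq_mul, nsmul_eq_mul, Nat.add_sub_cancel]
    push_cast
    linear_combination (m + 1) * v ^ (m + 1) * h
  rw [← nsmul_right_inj m.succ_ne_zero, ← map_nsmul, euler, map_sub, coeff_succ_X_mul,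
    coeff_derivative, map_nsmul, nsmul_eq_mul, smul_zero]
  push_cast
  ring

lemma subst_eq_mul_subst_shift_add_C {g : R⟦X⟧} (hg : HasSubst g) (f : R⟦X⟧) :
    f.subst g = g * (mk fun n ↦ coeff (n + 1) f).subst g + C (constantCoeff f) := by
  conv_lhs => rw [eq_X_mul_shift_add_const f]
  rw [subst_add hg, subst_mul hg, subst_X hg, subst_C]
  rfl

-- For `u = X * w`, the left side is the residue of `f(u) du / u ^ (m + 1)`.
theorem coeff_subst_X_mul_mul_derivative_mul_pow [IsAddTorsionFree R] {v w : R⟦X⟧}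
    (h : v * w = 1) (f : R⟦X⟧) (m : ℕ) :
    coeff m (f.subst (X * w) * d⁄dX R (X * w) * v ^ (m + 1)) = coeff m f := by
  have hsubst : HasSubst (X * w) := .of_constantCoeff_zero' (by simp)
  induction m generalizing f with
  | zero =>
    have hconst : constantCoeff w * constantCoeff v = 1 := by
      rw [← map_mul, mul_comm, h, map_one]
    simp [subst_eq_mul_subst_shift_add_C hsubst f, mul_assoc, hconst]
  | succ m ih =>
    set g : R⟦X⟧ := mk fun n ↦ coeff (n + 1) f
    have split : f.subst (X * w) * d⁄dX R (X * w) * v ^ (m + 2) =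
        X * (g.subst (X * w) * d⁄dX R (X * w) * v ^ (m + 1)) +
          C (constantCoeff f) * (d⁄dX R (X * w) * v ^ (m + 2)) := by
      rw [subst_eq_mul_subst_shift_add_C hsubst f]
      linear_combination X * g.subst (X * w) * d⁄dX R (X * w) * v ^ (m + 1) * h
    rw [split, map_add, coeff_succ_X_mul, ih, coeff_C_mul,
      coeff_succ_derivative_X_mul_mul_pow h, mul_zero, add_zero, coeff_mk]

end FormalResidue

section BinomialSeries

open PowerSeries

variable {R : Type*} [CommRing R] [BinomialRing R]

section Algebra

variable {A : Type*} [Ring A] [Algebra R A]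

lemma binomialSeries_neg_mul_self (r : R) :
    binomialSeries A (-r) * binomialSeries A r = 1 := by
  rw [← binomialSeries_add, neg_add_cancel, binomialSeries_zero]

lemma binomialSeries_one : binomialSeries A (1 : R) = 1 + X := by
  simpa using binomialSeries_nat (R := R) (A := A) 1

lemma binomialSeries_natCast_mul (k : ℕ) (r : R) :
    binomialSeries A (k * r) = binomialSeries A r ^ k := by
  induction k with
  | zero => simp
  | succ k ih => rw [pow_succ, ← ih, ← binomialSeries_add, Nat.cast_succ, add_one_mul]

end Algebra

lemma succ_mul_choose_succ (r : R) (n : ℕ) :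
    (n + 1) * Ring.choose r (n + 1) = (r - n) * Ring.choose r n := by
  have h := Ring.choose_smul_choose r n.le_succ
  rw [Nat.choose_succ_self_right, Nat.succ_sub n.le_refl, Nat.sub_self, Ring.choose_one_right,
    nsmul_eq_mul, Nat.cast_succ] at h
  rw [h, mul_comm]

lemma choose_add_natCast_eq_neg_one_pow_mul_choose_neg (r : R) (n : ℕ) :
    Ring.choose (r + n) n = (-1) ^ n * Ring.choose (-(r + 1)) n := by
  rw [Ring.choose_neg, add_right_comm, add_sub_cancel_right, Units.smul_def, zsmul_eq_mul,
    Int.cast_negOnePow_natCast, ← mul_assoc, ← mul_pow, neg_one_mul, neg_neg, one_pow, one_mul]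

lemma one_add_X_mul_derivative_binomialSeries (r : R) :
    (1 + X) * d⁄dX R (binomialSeries R r) = C r * binomialSeries R r := by
  ext n
  rw [add_mul, one_mul, map_add, coeff_C_mul, coeff_derivative]
  rcases n with _ | n
  · simp
  · rw [coeff_succ_X_mul, coeff_derivative]
    simp only [binomialSeries_coeff, smul_eq_mul, mul_one]
    have hchoose := succ_mul_choose_succ r (n + 1)
    push_cast at hchoose ⊢
    linear_combination hchoose

lemma eq_binomialSeries_of_one_add_X_mul_derivative {f : R⟦X⟧} {r : R}
    (hf : (1 + X) * d⁄dX R f = C r * f) (hconst : constantCoeff f = 1) :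
    f = binomialSeries R r := by
  have : IsAddTorsionFree R := BinomialRing.toIsAddTorsionFree
  have hinv : binomialSeries R (-1 : R) * (1 + X) = 1 := by
    rw [← binomialSeries_one (R := R), binomialSeries_neg_mul_self]
  have hneg := one_add_X_mul_derivative_binomialSeries (-r)
  have quotient_eq_one : f * binomialSeries R (-r) = 1 := by
    refine derivative.ext ?_ (by simp [hconst])
    have mul_derivative_eq_zero : (1 + X) * d⁄dX R (f * binomialSeries R (-r)) = 0 := by
      rw [Derivation.leibniz, smul_eq_mul, smul_eq_mul]
      rw [map_neg] at hneg
      linear_combination f * hneg + binomialSeries R (-r) * hf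
    rw [derivative_one]
    linear_combination binomialSeries R (-1 : R) * mul_derivative_eq_zero -
      d⁄dX R (f * binomialSeries R (-r)) * hinv
  linear_combination binomialSeries R r * quotient_eq_one -
    f * binomialSeries_neg_mul_self (A := R) r

theorem binomialSeries_subst_binomialSeries_sub_one (r s : R) :
    (binomialSeries R r).subst (binomialSeries R s - 1) = binomialSeries R (r * s) := by
  have hsubst : HasSubst (binomialSeries R s - 1) := .of_constantCoeff_zero' (by simp)
  refine eq_binomialSeries_of_one_add_X_mul_derivative ?_ ?_
  · have outer : binomialSeries R s * (d⁄dX R (binomialSeries R r)).subst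
          (binomialSeries R s - 1) =
        C r * (binomialSeries R r).subst (binomialSeries R s - 1) := by
      have hone : (1 : R⟦X⟧).subst (binomialSeries R s - 1) = (1 : R⟦X⟧) := by
        rw [← coe_substAlgHom hsubst, map_one]
      have hC : (C r).subst (binomialSeries R s - 1) = C r := subst_C r
      have h := congrArg (subst (binomialSeries R s - 1))
        (one_add_X_mul_derivative_binomialSeries r)
      rwa [subst_mul hsubst, subst_add hsubst, hone, subst_X hsubst, add_sub_cancel,
        subst_mul hsubst, hC] at h
    rw [derivative_subst hsubst, map_sub, derivative_one, sub_zero, map_mul]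
    linear_combination
      (d⁄dX R (binomialSeries R r)).subst (binomialSeries R s - 1) *
        one_add_X_mul_derivative_binomialSeries s + C s * outer
  · rw [subst_eq_mul_subst_shift_add_C hsubst]
    simp

end BinomialSeries

section Schlomilch

open PowerSeries

variable {R : Type*} [CommRing R] [BinomialRing R]

lemma binomialSeries_two_sub_one : binomialSeries R (2 : R) - 1 = X * (C 2 + X) := by
  have hsq : binomialSeries R (2 : R) = (1 + X) ^ 2 := by
    simpa using binomialSeries_nat (R := R) (A := R) 2
  rw [hsq, map_ofNat]
  ring

lemma C_invOf_mul_rescale_binomialSeries_neg_one_mul (a : R) [Invertible a] :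
    (C ⅟a * rescale ⅟a (binomialSeries R (-1 : R))) * (C a + X) = 1 := by
  have factor : C a + X = C a * rescale ⅟a (binomialSeries R (1 : R)) := by
    rw [binomialSeries_one, map_add, map_one, rescale_X, mul_add, mul_one, ← mul_assoc, ← map_mul,
      mul_invOf_self, map_one, one_mul]
  rw [factor, mul_mul_mul_comm, ← map_mul, ← map_mul, invOf_mul_self, binomialSeries_neg_mul_self,
    map_one, map_one, one_mul]

lemma coeff_C_mul_rescale_binomialSeries_pow (a r : R) (k n : ℕ) :
    coeff n ((C a * rescale a (binomialSeries R r)) ^ k) =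
      a ^ (k + n) * Ring.choose (k * r) n := by
  rw [mul_pow, ← map_pow, ← map_pow, ← binomialSeries_natCast_mul, coeff_C_mul, coeff_rescale,
    binomialSeries_coeff, smul_eq_mul, mul_one, pow_add, mul_assoc]

theorem choose_eq_sum_range_choose_neg_mul_choose [Invertible (2 : R)] (m : ℕ) (r : R) :
    Ring.choose r m = ∑ n ∈ Finset.range (m + 1),
      ⅟(2 : R) ^ (m + n) * Ring.choose (-(m + 1) : R) n * Ring.choose (2 * r + 1) (m - n) := by
  have : IsAddTorsionFree R := BinomialRing.toIsAddTorsionFree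
  set v : R⟦X⟧ := C ⅟2 * rescale ⅟2 (binomialSeries R (-1 : R))
  have hderiv : d⁄dX R (X * (C 2 + X)) = C (2 : R) * binomialSeries R (1 : R) := by
    simp only [binomialSeries_one, Derivation.leibniz, map_add, derivative_C, derivative_X,
      smul_eq_mul, zero_add, mul_one]
    rw [map_ofNat]
    ring
  calc Ring.choose r m = coeff m (binomialSeries R r) := by simp
    _ = coeff m ((binomialSeries R r).subst (X * (C 2 + X)) * d⁄dX R (X * (C 2 + X)) *
          v ^ (m + 1)) :=
      (coeff_subst_X_mul_mul_derivative_mul_pow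
        (C_invOf_mul_rescale_binomialSeries_neg_one_mul 2) _ m).symm
    _ = coeff m (C 2 * (v ^ (m + 1) * binomialSeries R (2 * r + 1))) := by
      rw [hderiv, ← binomialSeries_two_sub_one, binomialSeries_subst_binomialSeries_sub_one,
        binomialSeries_add, mul_comm r]
      ring_nf
    _ = _ := by
      rw [coeff_C_mul, coeff_mul, Finset.Nat.sum_antidiagonal_eq_sum_range_succ_mk, Finset.mul_sum]
      refine Finset.sum_congr rfl fun n _ ↦ ?_
      rw [coeff_C_mul_rescale_binomialSeries_pow, binomialSeries_coeff, smul_eq_mul, mul_one,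
        add_right_comm, pow_succ', mul_neg_one, Nat.cast_succ]
      simp only [← mul_assoc, mul_invOf_self, one_mul]

theorem schlomilch_binomial_general [Invertible (2 : R)] (m : ℕ) (x : R) :
    Ring.choose (x + m) m = ∑ n ∈ Finset.range (m + 1),
      ⅟2 ^ (m + n) * ((m + n).choose m : R) * Ring.choose (2 * x + (m - n : ℕ)) (m - n) := by
  rw [choose_add_natCast_eq_neg_one_pow_mul_choose_neg,
    choose_eq_sum_range_choose_neg_mul_choose, Finset.mul_sum]
  refine Finset.sum_congr rfl fun n hn ↦ ?_
  have hnm : n ≤ m := Finset.mem_range_succ_iff.mp hn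
  have sign_split : (-1 : R) ^ m = (-1) ^ n * (-1) ^ (m - n) := by
    rw [← pow_add, Nat.add_sub_of_le hnm]
  have hdouble : 2 * -(x + 1) + 1 = -(2 * x + 1) := by ring
  rw [Nat.choose_symm_add, ← Ring.choose_natCast, Nat.cast_add,
    choose_add_natCast_eq_neg_one_pow_mul_choose_neg (m : R),
    choose_add_natCast_eq_neg_one_pow_mul_choose_neg (2 * x), sign_split, hdouble]
  ring

end Schlomilch

/-- For all non-negative integers `m` and `l`,
`C(m+l, m) = Σ_{n=0}^{m} 2^{−(m+n)} · C(m+n, m) · C(2l+m−n, 2l)`. -/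
theorem schlomilch_binomial (m l : ℕ) :
    ((m + l).choose m : ℝ) =
      ∑ n ∈ Finset.range (m + 1),
        (2 : ℝ) ^ (-((m : ℤ) + (n : ℤ))) * ((m + n).choose m : ℝ) *
          ((2 * l + m - n).choose (2 * l) : ℝ) := by
  have h := schlomilch_binomial_general m (l : ℝ)
  rw [← Nat.cast_add, Ring.choose_natCast, add_comm l m] at h
  rw [h]
  refine Finset.sum_congr rfl fun n hn ↦ ?_
  have hnm : n ≤ m := Finset.mem_range_succ_iff.mp hn
  have hcast : 2 * (l : ℝ) + (m - n : ℕ) = (2 * l + (m - n) : ℕ) := by push_cast; rfl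
  rw [hcast, Ring.choose_natCast, ← Nat.choose_symm_add, ← Nat.add_sub_assoc hnm, invOf_eq_inv,
    inv_pow, zpow_neg, ← Nat.cast_add, zpow_natCast]
end

section
/- Generalized Schlömilch formula: let w, z ∈ ℂ with w ∉ ℤ, z ∉ ℤ, and w + z − 1/2 ∉ ℤ. Then the series Σ_{n=0}^{∞} (Γ(w+z−n−1/2) / (2ⁿ · n!)) · (w−z−n+1/2)_{2n} converges, and its sum equals (1/√(2π)) · 2^{w+z} · Γ(w) · Γ(z) / (1 − cot(πw)·cot(πz)). -/
/-!
Put `a = w + z - 1/2` and `b = w - z + 1/2`. Up to the factor `Γ(a)`, the series is the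
hypergeometric series `₂F₁(b, 1 - b; 1 - a; 1/2)`, so the theorem reduces to Bailey's evaluation of
`F(c) = ₂F₁(b, 1 - b; c; 1/2)`, followed by the duplication and reflection formulas for `Γ`.

For Bailey's theorem, a telescoping (WZ-type) identity between the terms of `F(c)` and `F(c + 2)`
gives `F(c) = (c + b)(c + 1 - b) / (c (c + 1)) * F(c + 2)`. Since `F(c + 2N) → 1`, iterating it
writes `F(c)` as an infinite product, which Gauss's limit formula for `Γ` evaluates.
-/

open Complex Filter Finset
open scoped Nat Real Topology

section PochhammerGamma

theorem ascPochhammer_two_mul_eval_sub_natCast {R : Type*} [CommRing R] (b : R) (n : ℕ) :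
    (ascPochhammer R (2 * n)).eval (b - n) =
      (-1) ^ n * (ascPochhammer R n).eval (1 - b) * (ascPochhammer R n).eval b := by
  have hlow : (ascPochhammer R n).eval (b - n) = (-1) ^ n * (ascPochhammer R n).eval (1 - b) := by
    rw [← neg_sub b 1, ascPochhammer_eval_neg_eq_descPochhammer,
      descPochhammer_eval_eq_ascPochhammer, ← mul_assoc, ← mul_pow]
    simp [sub_right_comm]
  rw [two_mul, ← ascPochhammer_mul, Polynomial.eval_mul, Polynomial.eval_comp, hlow]
  simp

theorem Gamma_sub_natCast {a : ℂ} (ha : ∀ k : ℕ, 1 - a ≠ -k) (n : ℕ) :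
    Gamma (a - n) = (-1) ^ n * Gamma a / (ascPochhammer ℂ n).eval (1 - a) := by
  induction n with
  | zero => simp
  | succ n ih =>
    have hne : a - (n + 1) ≠ 0 := fun h ↦ ha n (by linear_combination -h)
    have hrec : Gamma (a - n) = (a - (n + 1)) * Gamma (a - (n + 1)) := by
      rw [← Gamma_add_one _ hne]
      ring_nf
    have hfactor : 1 - a + n = -(a - (n + 1)) := by ring
    push_cast
    rw [ascPochhammer_succ_eval, hfactor, ← div_div, eq_div_iff (neg_ne_zero.mpr hne), pow_succ]
    linear_combination hrec - ih

theorem inv_Gamma_one_sub {s : ℂ} (hs : ∀ k : ℕ, s ≠ -k) :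
    (Gamma (1 - s))⁻¹ = Gamma s * sin (π * s) / π := by
  rw [eq_div_of_mul_eq (Gamma_ne_zero hs) ((mul_comm _ _).trans (Gamma_mul_Gamma_one_sub s)),
    inv_div, div_div_eq_mul_div]

theorem tendsto_inv_GammaSeq (s : ℂ) :
    Tendsto (fun n ↦ (GammaSeq s n)⁻¹) atTop (𝓝 (Gamma s)⁻¹) := by
  by_cases hs : Gamma s = 0
  · obtain ⟨m, rfl⟩ := (Gamma_eq_zero_iff s).mp hs
    -- At a pole of `Γ` a factor of the denominator vanishes, and `x / 0 = 0`.
    refine tendsto_const_nhds.congr' ?_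
    filter_upwards [eventually_ge_atTop m] with n hn
    rw [hs, GammaSeq, prod_eq_zero (mem_range.mpr (Nat.lt_succ_of_le hn)) (neg_add_cancel _),
      div_zero]
  · exact (GammaSeq_tendsto_Gamma s).inv₀ hs

theorem tendsto_prod_range_div_Gamma {p q u v : ℂ} (h : p + q = u + v) :
    Tendsto (fun N ↦ ∏ k ∈ range N, (u + k) * (v + k) / ((p + k) * (q + k))) atTop
      (𝓝 (Gamma p * Gamma q / (Gamma u * Gamma v))) := by
  rw [← tendsto_add_atTop_iff_nat 1, div_eq_mul_inv, mul_inv]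
  refine Tendsto.congr' ?_ (((GammaSeq_tendsto_Gamma p).mul (GammaSeq_tendsto_Gamma q)).mul
    ((tendsto_inv_GammaSeq u).mul (tendsto_inv_GammaSeq v)))
  filter_upwards [eventually_ne_atTop 0] with N hN
  have hN' : (N : ℂ) ≠ 0 := Nat.cast_ne_zero.mpr hN
  have hpow : (N : ℂ) ^ p * (N : ℂ) ^ q = (N : ℂ) ^ u * (N : ℂ) ^ v := by
    rw [← cpow_add _ _ hN', ← cpow_add _ _ hN', h]
  have hu : (N : ℂ) ^ u ≠ 0 := by simp [cpow_eq_zero_iff, hN']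
  have hv : (N : ℂ) ^ v ≠ 0 := by simp [cpow_eq_zero_iff, hN']
  have hfac : (N ! : ℂ) ≠ 0 := Nat.cast_ne_zero.mpr N.factorial_ne_zero
  simp only [GammaSeq, prod_div_distrib, prod_mul_distrib, inv_div]
  calc
    _ = ((N : ℂ) ^ p * (N : ℂ) ^ q) / ((N : ℂ) ^ u * (N : ℂ) ^ v) * (N ! / N !) ^ 2 *
        ((∏ k ∈ range (N + 1), (u + k)) * ∏ k ∈ range (N + 1), (v + k)) /
        ((∏ k ∈ range (N + 1), (p + k)) * ∏ k ∈ range (N + 1), (q + k)) := by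
      simp only [div_eq_mul_inv, mul_inv]
      ring
    _ = _ := by rw [hpow, div_self (mul_ne_zero hu hv), div_self hfac, one_pow, one_mul, one_mul]

end PochhammerGamma

section HypergeometricTerm

/-- The `n`-th term of Gauss's hypergeometric series `₂F₁ a b c x`. -/
noncomputable def hypergeometricTerm {𝕂 : Type*} [Field 𝕂] (a b c x : 𝕂) (n : ℕ) : 𝕂 :=
  ordinaryHypergeometricCoefficient a b c n * x ^ n

section Field

variable {𝕂 : Type*} [Field 𝕂] (a b c x : 𝕂)

theorem hypergeometricTerm_zero : hypergeometricTerm a b c x 0 = 1 := by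
  simp [hypergeometricTerm, ordinaryHypergeometricCoefficient]

theorem hypergeometricTerm_succ (n : ℕ) :
    hypergeometricTerm a b c x (n + 1) =
      hypergeometricTerm a b c x n * ((a + n) * (b + n) * x / ((c + n) * (n + 1))) := by
  simp only [hypergeometricTerm, ordinaryHypergeometricCoefficient, Nat.factorial_succ,
    Nat.cast_mul, Nat.cast_succ, ascPochhammer_succ_eval, mul_inv, div_eq_mul_inv]
  ring

variable {c} in
theorem hypergeometricTerm_add_one (hc : c ≠ 0) (n : ℕ) :
    hypergeometricTerm a b (c + 1) x n = hypergeometricTerm a b c x n * (c / (c + n)) := by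
  have hpoch : c * (ascPochhammer 𝕂 n).eval (c + 1) = (ascPochhammer 𝕂 n).eval c * (c + n) := by
    rw [← ascPochhammer_succ_eval, ascPochhammer_succ_left]
    simp [Polynomial.eval_comp]
  have hinv : ((ascPochhammer 𝕂 n).eval (c + 1))⁻¹ =
      ((ascPochhammer 𝕂 n).eval c)⁻¹ * (c / (c + n)) := by
    rw [eq_div_of_mul_eq hc ((mul_comm _ _).trans hpoch), inv_div, div_eq_mul_inv, mul_inv]
    ring
  simp only [hypergeometricTerm, ordinaryHypergeometricCoefficient, hinv]
  ring

end Field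

variable (a b : ℂ) {c x : ℂ}

theorem summable_norm_hypergeometricTerm (hc : ∀ k : ℕ, c ≠ -k) (hx : ‖x‖ < 1) :
    Summable fun n ↦ ‖hypergeometricTerm a b c x n‖ := by
  have hmem : x ∈ Metric.eball 0 (regularizedGaussHGFunSeries a b c).radius := by
    refine Metric.eball_subset_eball (radius_regularizedGaussHGFunSeries_ge_one a b c) ?_
    simpa [← ofReal_norm] using hx
  refine ((FormalMultilinearSeries.summable_norm_apply _ hmem).mul_left ‖Gamma c‖).congr fun n ↦ ?_
  rw [FormalMultilinearSeries.apply_eq_prod_smul_coeff,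
    ← Gamma_inv_mul_ordinaryHypergeometricSeries_eq hc, ← norm_mul]
  congr 1
  rw [ordinaryHypergeometricSeries, FormalMultilinearSeries.coeff_ofScalars, prod_const, card_univ,
    Fintype.card_fin, smul_eq_mul, mul_left_comm, mul_inv_cancel_left₀ (Gamma_ne_zero hc), mul_comm,
    hypergeometricTerm]

theorem hasSum_hypergeometricTerm (hc : ∀ k : ℕ, c ≠ -k) (hx : ‖x‖ < 1) :
    HasSum (hypergeometricTerm a b c x) (₂F₁ a b c x) := by
  rw [ordinaryHypergeometric_eq_tsum]
  exact (summable_norm_hypergeometricTerm a b hc hx).of_norm.hasSum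

theorem norm_hypergeometricTerm_le (hc : 1 ≤ c.re) (n : ℕ) :
    ‖hypergeometricTerm a b c x n‖ ≤ ‖hypergeometricTerm a b 1 x n‖ := by
  induction n with
  | zero => simp only [hypergeometricTerm_zero, le_refl]
  | succ n ih =>
    have hnorm : ‖(1 : ℂ) + n‖ = 1 + n := by exact_mod_cast Complex.norm_natCast (1 + n)
    have hle : ‖(1 : ℂ) + n‖ ≤ ‖c + n‖ := by
      refine hnorm.trans_le (le_trans ?_ (re_le_norm _))
      simpa using hc
    have hpos : 0 < ‖(1 : ℂ) + n‖ := by rw [hnorm]; positivity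
    have hpos' : 0 < ‖(n : ℂ) + 1‖ := by rwa [add_comm]
    simp only [hypergeometricTerm_succ, norm_mul, norm_div]
    gcongr

variable {ι : Type*} {l : Filter ι} {γ : ι → ℂ}

theorem tendsto_hypergeometricTerm_of_re_atTop (hγ : Tendsto (fun i ↦ (γ i).re) l atTop) (n : ℕ) :
    Tendsto (fun i ↦ hypergeometricTerm a b (γ i) x n) l
      (𝓝 (Pi.single (M := fun _ ↦ ℂ) 0 1 n)) := by
  induction n with
  | zero => simpa [hypergeometricTerm_zero] using tendsto_const_nhds
  | succ n ih =>
    have hnorm : Tendsto (fun i ↦ ‖γ i + n‖) l atTop :=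
      tendsto_atTop_mono (fun i ↦ by simpa using re_le_norm (γ i + n))
        (tendsto_atTop_add_const_right l (n : ℝ) hγ)
    have hinv : Tendsto (fun i ↦ (γ i + n)⁻¹) l (𝓝 0) :=
      tendsto_inv₀_cobounded.comp (tendsto_norm_atTop_iff_cobounded.mp hnorm)
    rw [Pi.single_eq_of_ne n.succ_ne_zero]
    convert ih.mul (hinv.const_mul ((a + n) * (b + n) * x / (n + 1))) using 2
    · rw [hypergeometricTerm_succ]
      simp only [div_eq_mul_inv, mul_inv]
      ring
    · simp

theorem tendsto_ordinaryHypergeometric_of_re_atTop (hx : ‖x‖ < 1)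
    (hγ : Tendsto (fun i ↦ (γ i).re) l atTop) :
    Tendsto (fun i ↦ ₂F₁ a b (γ i) x) l (𝓝 1) := by
  have hone (k : ℕ) : (1 : ℂ) ≠ -k := fun h ↦
    k.cast_add_one_ne_zero (R := ℂ) (by linear_combination h)
  have hlim := tendsto_tsum_of_dominated_convergence (summable_norm_hypergeometricTerm a b hone hx)
    (tendsto_hypergeometricTerm_of_re_atTop a b hγ) ((hγ.eventually_ge_atTop 1).mono
      fun i hi ↦ norm_hypergeometricTerm_le a b hi)
  rw [tsum_pi_single] at hlim
  simpa only [ordinaryHypergeometric_eq_tsum] using! hlim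

end HypergeometricTerm

section Bailey

variable (b : ℂ) {c : ℂ}

theorem sum_range_hypergeometricTerm_sub (hc : ∀ k : ℕ, c ≠ -k) (N : ℕ) :
    ∑ n ∈ range N, (hypergeometricTerm b (1 - b) c (1 / 2) n -
        (c + b) * (c + 1 - b) / (c * (c + 1)) * hypergeometricTerm b (1 - b) (c + 2) (1 / 2) n) =
      -2 * N / (c + N) * hypergeometricTerm b (1 - b) c (1 / 2) N := by
  have hne (k : ℕ) : c + k ≠ 0 := fun h ↦ hc k (eq_neg_of_add_eq_zero_left h)
  have hc0 : c ≠ 0 := by simpa using hc 0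
  have hc1 : c + 1 ≠ 0 := by simpa using hne 1
  induction N with
  | zero => simp
  | succ n ih =>
    have hcn := hne n
    have hcn1 : c + 1 + n ≠ 0 := by simpa [add_assoc, add_comm, add_left_comm] using hne (n + 1)
    have hn1 : (n : ℂ) + 1 ≠ 0 := n.cast_add_one_ne_zero
    have htwo : c + 2 = c + 1 + 1 := by ring
    have hsucc : c + (n + 1) = c + 1 + n := by ring
    rw [sum_range_succ, ih, htwo, hypergeometricTerm_add_one _ _ _ hc1,
      hypergeometricTerm_add_one _ _ _ hc0, hypergeometricTerm_succ]
    push_cast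
    rw [hsucc]
    field_simp
    ring

theorem ordinaryHypergeometric_one_half_eq_mul_add_two (hc : ∀ k : ℕ, c ≠ -k) :
    ₂F₁ b (1 - b) c (1 / 2 : ℂ) =
      (c + b) * (c + 1 - b) / (c * (c + 1)) * ₂F₁ b (1 - b) (c + 2) (1 / 2 : ℂ) := by
  have hhalf : ‖(1 / 2 : ℂ)‖ < 1 := by norm_num
  have hc2 (k : ℕ) : c + 2 ≠ -k := fun h ↦ hc (k + 2) (by push_cast; linear_combination h)
  have hF := hasSum_hypergeometricTerm b (1 - b) hc hhalf
  have hF2 := hasSum_hypergeometricTerm b (1 - b) hc2 hhalf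
  have hboundary : Tendsto (fun N : ℕ ↦ -2 * N / (c + N) *
      hypergeometricTerm b (1 - b) c (1 / 2) N) atTop (𝓝 0) := by
    simpa using (tendsto_add_mul_div_add_mul_atTop_nhds (0 : ℂ) c (-2) one_ne_zero).mul
      hF.summable.tendsto_atTop_zero
  refine sub_eq_zero.mp (tendsto_nhds_unique ?_ hboundary)
  exact (hF.sub (hF2.mul_left _)).tendsto_sum_nat.congr (sum_range_hypergeometricTerm_sub b hc)

theorem ordinaryHypergeometric_one_half_eq_prod_mul (hc : ∀ k : ℕ, c ≠ -k) (N : ℕ) :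
    ₂F₁ b (1 - b) c (1 / 2 : ℂ) =
      (∏ k ∈ range N, ((c + b) / 2 + k) * ((c + 1 - b) / 2 + k) /
        ((c / 2 + k) * ((c + 1) / 2 + k))) * ₂F₁ b (1 - b) (c + 2 * N) (1 / 2 : ℂ) := by
  induction N with
  | zero => simp
  | succ N ih =>
    have hcN (k : ℕ) : c + 2 * N ≠ -k := fun h ↦
      hc (2 * N + k) (by push_cast; linear_combination h)
    have hfactor : (c + 2 * N + b) * (c + 2 * N + 1 - b) / ((c + 2 * N) * (c + 2 * N + 1)) =
        ((c + b) / 2 + N) * ((c + 1 - b) / 2 + N) / ((c / 2 + N) * ((c + 1) / 2 + N)) := by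
      rw [← mul_div_mul_left (((c + b) / 2 + N) * _) _ (by norm_num : (4 : ℂ) ≠ 0)]
      ring_nf
    have hparam : c + 2 * N + 2 = c + 2 * ((N + 1 : ℕ) : ℂ) := by push_cast; ring
    rw [ih, prod_range_succ, ordinaryHypergeometric_one_half_eq_mul_add_two b hcN, hfactor, hparam,
      mul_assoc]

theorem ordinaryHypergeometric_bailey (hc : ∀ k : ℕ, c ≠ -k) :
    ₂F₁ b (1 - b) c (1 / 2 : ℂ) =
      Gamma (c / 2) * Gamma ((c + 1) / 2) / (Gamma ((c + b) / 2) * Gamma ((c + 1 - b) / 2)) := by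
  have hre : Tendsto (fun N : ℕ ↦ (c + 2 * N).re) atTop atTop := by
    simpa using tendsto_atTop_add_const_left atTop c.re
      (tendsto_natCast_atTop_atTop.const_mul_atTop (two_pos (α := ℝ)))
  have hprod := tendsto_prod_range_div_Gamma
    (show c / 2 + (c + 1) / 2 = (c + b) / 2 + (c + 1 - b) / 2 by ring)
  have hlim := hprod.mul (tendsto_ordinaryHypergeometric_of_re_atTop b (1 - b)
    (by norm_num : ‖(1 / 2 : ℂ)‖ < 1) hre)
  rw [mul_one] at hlim
  exact tendsto_nhds_unique
    (tendsto_const_nhds.congr (ordinaryHypergeometric_one_half_eq_prod_mul b hc)) hlim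

end Bailey

section Schlomilch

theorem Gamma_sub_natCast_mul_ascPochhammer {a : ℂ} (ha : ∀ k : ℕ, 1 - a ≠ -k) (b : ℂ) (n : ℕ) :
    Gamma (a - n) / (2 ^ n * n !) * (ascPochhammer ℂ (2 * n)).eval (b - n) =
      Gamma a * hypergeometricTerm b (1 - b) (1 - a) (1 / 2) n := by
  have hsign : ((-1 : ℂ) ^ n) ^ 2 = 1 := by rw [← pow_mul, mul_comm, pow_mul]; simp
  rw [Gamma_sub_natCast ha, ascPochhammer_two_mul_eval_sub_natCast, hypergeometricTerm,
    ordinaryHypergeometricCoefficient, one_div_pow]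
  simp only [div_eq_mul_inv, mul_inv, one_mul]
  linear_combination (Gamma a * ((ascPochhammer ℂ n).eval (1 - a))⁻¹ * (2 ^ n)⁻¹ * (n ! : ℂ)⁻¹ *
    (ascPochhammer ℂ n).eval (1 - b) * (ascPochhammer ℂ n).eval b) * hsign

theorem Gamma_mul_ordinaryHypergeometric_one_half {a : ℂ} (ha : ∀ k : ℕ, 1 - a ≠ -k) (b : ℂ) :
    Gamma a * ₂F₁ b (1 - b) (1 - a) (1 / 2 : ℂ) =
      π * √π * 2 ^ a / sin (π * a) *
        ((Gamma ((1 - a + b) / 2))⁻¹ * (Gamma ((2 - a - b) / 2))⁻¹) := by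
  have hdup : Gamma ((1 - a) / 2) * Gamma ((1 - a + 1) / 2) = Gamma (1 - a) * 2 ^ a * √π := by
    convert Gamma_mul_Gamma_add_half ((1 - a) / 2) using 3 <;> ring_nf
  have hrefl := Gamma_mul_Gamma_one_sub a
  rw [ordinaryHypergeometric_bailey b ha, hdup,
    show 1 - a + 1 - b = 2 - a - b by ring, div_eq_mul_inv, mul_inv]
  linear_combination (2 ^ a * √π * ((Gamma ((1 - a + b) / 2))⁻¹ *
    (Gamma ((2 - a - b) / 2))⁻¹)) * hrefl

-- `Gamma` is `0` at its poles, so `(Gamma s)⁻¹` is the entire reciprocal Gamma function.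
theorem schlomilch_generalized_general (w z : ℂ) (hwz : ∀ n : ℤ, w + z - 1 / 2 ≠ (n : ℂ)) :
    HasSum
      (fun n : ℕ ↦ Gamma (w + z - n - 1 / 2) / (2 ^ n * (n ! : ℂ)) *
        (ascPochhammer ℂ (2 * n)).eval (w - z - n + 1 / 2))
      (π * √π * 2 ^ (w + z - 1 / 2) / sin (π * (w + z - 1 / 2)) *
        ((Gamma (1 - z))⁻¹ * (Gamma (1 - w))⁻¹)) := by
  have hpole (k : ℕ) : 1 - (w + z - 1 / 2) ≠ -k := fun h ↦
    hwz (k + 1) (by push_cast; linear_combination -h)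
  have hsum := (hasSum_hypergeometricTerm (w - z + 1 / 2) (1 - (w - z + 1 / 2)) hpole
    (by norm_num : ‖(1 / 2 : ℂ)‖ < 1)).mul_left (Gamma (w + z - 1 / 2))
  have hz : (1 - (w + z - 1 / 2) + (w - z + 1 / 2)) / 2 = 1 - z := by ring
  have hw : (2 - (w + z - 1 / 2) - (w - z + 1 / 2)) / 2 = 1 - w := by ring
  rw [Gamma_mul_ordinaryHypergeometric_one_half hpole, hz, hw] at hsum
  convert! hsum using 2 with n
  rw [← Gamma_sub_natCast_mul_ascPochhammer hpole, sub_right_comm (w + z),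
    sub_add_eq_add_sub (w - z), ← add_sub_right_comm]

theorem one_sub_cot_mul_cot {x y : ℂ} (hx : sin x ≠ 0) (hy : sin y ≠ 0) :
    1 - cot x * cot y = -cos (x + y) / (sin x * sin y) := by
  rw [cot, cot, cos_add]
  field_simp
  ring

theorem two_cpow_sub_one_half_mul_sqrt_pi (s : ℂ) :
    (2 : ℂ) ^ (s - 1 / 2) * √π = π * (1 / √(2 * π) * 2 ^ s) := by
  have hpi : (√π : ℂ) * √π = π := by exact_mod_cast Real.mul_self_sqrt Real.pi_pos.le
  have hpi0 : (√π : ℂ) ≠ 0 := ofReal_ne_zero.mpr (Real.sqrt_pos.mpr Real.pi_pos).ne'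
  have htwo : (2 : ℂ) ^ (1 / 2 : ℂ) = √2 := by
    rw [Real.sqrt_eq_rpow, ofReal_cpow zero_le_two]
    norm_num
  rw [cpow_sub _ _ two_ne_zero, htwo, Real.sqrt_mul zero_le_two, ofReal_mul, ← hpi]
  field_simp

theorem schlomilch_sum_eq {w z : ℂ} (hw : w ∈ integerComplement) (hz : z ∈ integerComplement) :
    π * √π * 2 ^ (w + z - 1 / 2) / sin (π * (w + z - 1 / 2)) *
        ((Gamma (1 - z))⁻¹ * (Gamma (1 - w))⁻¹) =
      1 / √(2 * π) * 2 ^ (w + z) * Gamma w * Gamma z / (1 - cot (π * w) * cot (π * z)) := by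
  have hpole {s : ℂ} (hs : s ∈ integerComplement) (k : ℕ) : s ≠ -k := fun h ↦
    hs ⟨-k, by simp [h]⟩
  have hsin : sin (π * (w + z - 1 / 2)) = -cos (π * w + π * z) := by
    rw [← sin_sub_pi_div_two]
    ring_nf
  have hpi : (π : ℂ) ≠ 0 := ofReal_ne_zero.mpr Real.pi_ne_zero
  rw [inv_Gamma_one_sub (hpole hw), inv_Gamma_one_sub (hpole hz), hsin,
    one_sub_cot_mul_cot (sin_pi_mul_ne_zero hw) (sin_pi_mul_ne_zero hz), mul_assoc (π : ℂ),
    mul_comm (√π : ℂ), two_cpow_sub_one_half_mul_sqrt_pi]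
  field_simp

end Schlomilch

/-- Generalized Schlömilch formula: for `w, z ∈ ℂ` with `w ∉ ℤ`, `z ∉ ℤ` and
`w + z − 1/2 ∉ ℤ`, the series `Σₙ (Γ(w+z−n−1/2)/(2ⁿ·n!)) · (w−z−n+1/2)_{2n}` converges to
`(1/√(2π)) · 2^{w+z} · Γ(w) · Γ(z) / (1 − cot(πw)·cot(πz))`. -/
theorem schlomilch_generalized (w z : ℂ)
    (hw : ∀ n : ℤ, w ≠ (n : ℂ)) (hz : ∀ n : ℤ, z ≠ (n : ℂ))
    (hwz : ∀ n : ℤ, w + z - 1 / 2 ≠ (n : ℂ)) :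
    HasSum
      (fun n : ℕ =>
        Complex.Gamma (w + z - n - 1 / 2) / (2 ^ n * (n.factorial : ℂ)) *
          (ascPochhammer ℂ (2 * n)).eval (w - z - n + 1 / 2))
      (1 / (Real.sqrt (2 * Real.pi) : ℂ) * (2 : ℂ) ^ (w + z) *
          Complex.Gamma w * Complex.Gamma z /
        (1 - Complex.cot (Real.pi * w) * Complex.cot (Real.pi * z))) := by
  rw [← schlomilch_sum_eq (fun ⟨n, hn⟩ ↦ hw n hn.symm) (fun ⟨n, hn⟩ ↦ hz n hn.symm)]
  exact schlomilch_generalized_general w z hwz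
end

section
/- For every non-negative integer m and every u ∈ ℂ, with k = 2m+1: cos(ku) = cos(u) · Σ_{n=0}^{m} ((−1)ⁿ/(2n)!) · sin^{2n}(u) · ∏_{j=1}^{n} (k² − (2j−1)²). -/
/-!
Over `ℂ`, `cos ((2m+1)u) = (-1)^m cos u · U_{2m}(sin u)`, where `U_{2m}` is the Chebyshev polynomial
of the second kind: substitute `θ = π/2 - u` in `U_{2m}(cos θ) sin θ = sin ((2m+1)θ)`. The product
`∏ (k² - (2j-1)²)` is, up to sign, the Taylor coefficient of `U_{2m}` at `0` multiplied by `(2n)!`: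
the differential equation satisfied by `U_{k-1}` turns into a two-term recurrence for its
derivatives at `0`.
-/

section Polynomial

open Polynomial Finset

theorem eval_eq_sum_range_of_coeff_odd_eq_zero {R : Type*} [Semiring R] {p : R[X]} {m : ℕ}
    (hodd : ∀ n, p.coeff (2 * n + 1) = 0) (hdeg : p.natDegree < 2 * m) (x : R) :
    p.eval x = ∑ n ∈ range m, p.coeff (2 * n) * x ^ (2 * n) := by
  rw [eval_eq_sum_range' hdeg]
  clear hdeg
  induction m with
  | zero => simp
  | succ m ih => rw [mul_add_one, sum_range_succ, sum_range_succ, ih, sum_range_succ, hodd]; simp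

theorem coeff_eq_iterate_derivative_eval_zero_div_factorial {K : Type*} [DivisionRing K]
    [CharZero K] (p : K[X]) (n : ℕ) :
    p.coeff n = (derivative^[n] p).eval 0 / n.factorial := by
  have hn : (n.factorial : K) ≠ 0 := mod_cast n.factorial_ne_zero
  rw [eq_div_iff hn, ← coeff_zero_eq_eval_zero, coeff_iterate_derivative, zero_add,
    Nat.descFactorial_self, nsmul_eq_mul, Nat.cast_comm]

end Polynomial

section Chebyshev

open Polynomial Polynomial.Chebyshev Finset

variable {R : Type*} [CommRing R]

theorem iterate_derivative_two_mul_U_eval_zero (n : ℤ) (k : ℕ) :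
    (derivative^[2 * k] (U R n)).eval 0 =
      (-1) ^ k * (∏ j ∈ Icc 1 k, (((n : R) + 1) ^ 2 - (2 * j - 1) ^ 2)) * (U R n).eval 0 := by
  induction k with
  | zero => simp
  | succ k ih =>
    rw [mul_add_one, iterate_derivative_U_eval_zero_recurrence, ih,
      prod_Icc_succ_top (Nat.le_add_left 1 k)]
    push_cast
    ring

theorem derivative_U_eval_zero_of_even {n : ℤ} (hn : Even n) :
    (derivative (U R n)).eval 0 = 0 := by
  simpa [hn.add_one] using congr_arg (eval 0) (add_one_mul_T_eq_poly_in_U (R := R) n)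

theorem iterate_derivative_two_mul_add_one_U_eval_zero_of_even {n : ℤ} (hn : Even n) (k : ℕ) :
    (derivative^[2 * k + 1] (U R n)).eval 0 = 0 := by
  induction k with
  | zero => exact derivative_U_eval_zero_of_even hn
  | succ k ih =>
    rw [mul_add_one, add_right_comm, iterate_derivative_U_eval_zero_recurrence, ih, mul_zero]

theorem U_two_mul_eval_eq_sum {K : Type*} [Field K] [CharZero K] (m : ℕ) (x : K) :
    (U K (2 * m)).eval x = (-1) ^ m * ∑ n ∈ range (m + 1), (-1) ^ n / (2 * n).factorial *
      x ^ (2 * n) * ∏ j ∈ Icc 1 n, ((2 * (m : K) + 1) ^ 2 - (2 * j - 1) ^ 2) := by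
  have hodd (n : ℕ) : (U K (2 * m)).coeff (2 * n + 1) = 0 := by
    rw [coeff_eq_iterate_derivative_eval_zero_div_factorial,
      iterate_derivative_two_mul_add_one_U_eval_zero_of_even (even_two_mul _), zero_div]
  have hdeg : (U K (2 * m)).natDegree < 2 * (m + 1) := by
    have := natDegree_U_natCast K (2 * m)
    push_cast at this
    omega
  rw [eval_eq_sum_range_of_coeff_odd_eq_zero hodd hdeg, mul_sum]
  refine sum_congr rfl fun n _ ↦ ?_
  rw [coeff_eq_iterate_derivative_eval_zero_div_factorial, iterate_derivative_two_mul_U_eval_zero,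
    U_eval_two_mul_zero, Int.coe_negOnePow_natCast]
  push_cast
  ring

theorem cos_two_mul_add_one_mul_eq_U_eval_sin (m : ℤ) (u : ℂ) :
    Complex.cos ((2 * m + 1) * u) =
      (-1) ^ m * (Complex.cos u * (U ℂ (2 * m)).eval (Complex.sin u)) := by
  have hU := U_complex_cos (Real.pi / 2 - u) (2 * m)
  have hangle : ((2 * m : ℤ) + 1 : ℂ) * (Real.pi / 2 - u) =
      Real.pi / 2 - (2 * m + 1) * u + m * Real.pi := by push_cast; ring
  rw [Complex.cos_pi_div_two_sub, Complex.sin_pi_div_two_sub, hangle,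
    Complex.sin_antiperiodic.add_int_mul_eq, Complex.sin_pi_div_two_sub, Int.cast_negOnePow] at hU
  rw [mul_comm (Complex.cos u), hU, ← mul_assoc, ← mul_zpow]
  simp

end Chebyshev

/-- For every non-negative integer `m` and every `u ∈ ℂ`, with `k = 2m+1`:
`cos(ku) = cos(u) · Σ_{n=0}^{m} ((−1)ⁿ/(2n)!) · sin^{2n}(u) · ∏_{j=1}^{n} (k² − (2j−1)²)`. -/
theorem cos_odd_multiple (m : ℕ) (u : ℂ) :
    Complex.cos ((2 * (m : ℂ) + 1) * u) =
      Complex.cos u *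
        ∑ n ∈ Finset.range (m + 1),
          ((-1 : ℂ) ^ n / ((2 * n).factorial : ℂ)) * Complex.sin u ^ (2 * n) *
            ∏ j ∈ Finset.Icc 1 n, ((2 * (m : ℂ) + 1) ^ 2 - (2 * (j : ℂ) - 1) ^ 2) := by
  have hcos := cos_two_mul_add_one_mul_eq_U_eval_sin m u
  rw [U_two_mul_eval_eq_sum, zpow_natCast, Int.cast_natCast] at hcos
  rw [hcos, mul_left_comm, ← mul_assoc ((-1) ^ m), ← mul_pow]
  simp
end

section
/- For every non-negative integer m and every nonzero x ∈ ℂ: x^{2m} + x^{−(2m+2)} = (1 + x^{−2}) · Σ_{n=0}^{m} (1/(2n)!) · (x − 1/x)^{2n} · (m−n+1)_{2n}. -/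
/-!
With `z = x⁻¹` and `y = (x - z) ^ 2`, the identity multiplied by `x` is the symmetric formula
`(x + z) * b m y = x ^ (2 * m + 1) + z ^ (2 * m + 1)`, where
`b m y = ∑ n, (m + n).choose (2 * n) * y ^ n` is a Morgan-Voyce polynomial. Its companion
`B m y = ∑ n, (m + n + 1).choose (2 * n + 1) * y ^ n` satisfies
`(x ^ 2 - z ^ 2) * B m y = x ^ (2 * m + 2) - z ^ (2 * m + 2)`. Pascal's rule expresses the next `b`
and `B` through the previous ones, and both formulas follow together by induction on `m`.
-/

open Finset

section MorganVoyce

variable {R : Type*} [CommSemiring R]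

/-- The value at `y` of the Morgan-Voyce polynomial usually written `b_m`; the coefficient
`(m + n).choose (m - n)` is written without subtraction. -/
def morganVoyceSmall (m : ℕ) (y : R) : R :=
  ∑ n ∈ range (m + 1), ((m + n).choose (2 * n) : R) * y ^ n

/-- The value at `y` of the Morgan-Voyce polynomial usually written `B_m`, the companion of `b_m` in
the mutual recurrence; the coefficient `(m + n + 1).choose (m - n)` is written without
subtraction. -/
def morganVoyceBig (m : ℕ) (y : R) : R :=
  ∑ n ∈ range (m + 1), ((m + n + 1).choose (2 * n + 1) : R) * y ^ n

@[simp]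
theorem morganVoyceSmall_zero (y : R) : morganVoyceSmall 0 y = 1 := by
  simp [morganVoyceSmall]

@[simp]
theorem morganVoyceBig_zero (y : R) : morganVoyceBig 0 y = 1 := by
  simp [morganVoyceBig]

theorem morganVoyceSmall_eq_sum_range_add_two (m : ℕ) (y : R) :
    morganVoyceSmall m y = ∑ n ∈ range (m + 2), ((m + n).choose (2 * n) : R) * y ^ n := by
  rw [sum_range_succ _ (m + 1), Nat.choose_eq_zero_of_lt (by lia), Nat.cast_zero, zero_mul,
    add_zero, morganVoyceSmall]

theorem morganVoyceBig_eq_sum_range_add_two (m : ℕ) (y : R) :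
    morganVoyceBig m y = ∑ n ∈ range (m + 2), ((m + n + 1).choose (2 * n + 1) : R) * y ^ n := by
  rw [sum_range_succ _ (m + 1), Nat.choose_eq_zero_of_lt (by lia), Nat.cast_zero, zero_mul,
    add_zero, morganVoyceBig]

theorem morganVoyceSmall_succ (m : ℕ) (y : R) :
    morganVoyceSmall (m + 1) y = morganVoyceSmall m y + y * morganVoyceBig m y := by
  have pascal (n : ℕ) : (m + 1 + (n + 1)).choose (2 * (n + 1)) =
      (m + n + 1).choose (2 * n + 1) + (m + (n + 1)).choose (2 * (n + 1)) := by
    rw [show m + 1 + (n + 1) = m + n + 1 + 1 by ring]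
    exact Nat.choose_succ_succ _ _
  rw [morganVoyceSmall_eq_sum_range_add_two m, morganVoyceSmall, morganVoyceBig,
    sum_range_succ' _ (m + 1), sum_range_succ' _ (m + 1), mul_sum,
    add_right_comm (Finset.sum _ _), ← sum_add_distrib]
  congr 1
  · refine sum_congr rfl fun n _ ↦ ?_
    rw [pascal]
    push_cast
    ring
  · simp

theorem morganVoyceBig_succ (m : ℕ) (y : R) :
    morganVoyceBig (m + 1) y = morganVoyceBig m y + morganVoyceSmall (m + 1) y := by
  have pascal (n : ℕ) : (m + 1 + n + 1).choose (2 * n + 1) =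
      (m + n + 1).choose (2 * n + 1) + (m + 1 + n).choose (2 * n) := by
    rw [Nat.choose_succ_succ, add_comm, add_right_comm m 1 n]
  rw [morganVoyceBig_eq_sum_range_add_two m, morganVoyceSmall, morganVoyceBig, ← sum_add_distrib]
  refine sum_congr rfl fun n _ ↦ ?_
  rw [pascal, Nat.cast_add, add_mul]

end MorganVoyce

theorem morganVoyce_sub_sq_of_mul_eq_one {R : Type*} [CommRing R] {x z : R} (h : x * z = 1)
    (m : ℕ) :
    (x + z) * morganVoyceSmall m ((x - z) ^ 2) = x ^ (2 * m + 1) + z ^ (2 * m + 1) ∧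
      (x ^ 2 - z ^ 2) * morganVoyceBig m ((x - z) ^ 2) = x ^ (2 * m + 2) - z ^ (2 * m + 2) := by
  induction m with
  | zero => simp
  | succ m ih =>
    obtain ⟨small, big⟩ := ih
    have small_succ : (x + z) * morganVoyceSmall (m + 1) ((x - z) ^ 2) =
        x ^ (2 * (m + 1) + 1) + z ^ (2 * (m + 1) + 1) := by
      rw [morganVoyceSmall_succ]
      linear_combination small + (x - z) * big - (x ^ (2 * m + 1) + z ^ (2 * m + 1)) * h
    refine ⟨small_succ, ?_⟩
    rw [morganVoyceBig_succ]
    linear_combination big + (x - z) * small_succ - (x ^ (2 * m + 2) - z ^ (2 * m + 2)) * h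

theorem ascPochhammer_eval_natCast_add_one {S : Type*} [Semiring S] (a k : ℕ) :
    (ascPochhammer S k).eval (a + 1 : S) = (k.factorial : S) * ((a + k).choose k : S) := by
  rw [← Nat.cast_add_one, ← Nat.cast_ascFactorial, Nat.ascFactorial_eq_factorial_mul_choose,
    Nat.cast_mul]

theorem sum_inv_factorial_mul_ascPochhammer_eq_morganVoyceSmall {K : Type*} [Field K] [CharZero K]
    (m : ℕ) (w : K) :
    ∑ n ∈ range (m + 1), (1 / ((2 * n).factorial : K)) * w ^ (2 * n) *
      (ascPochhammer K (2 * n)).eval ((m : K) - n + 1) = morganVoyceSmall m (w ^ 2) := by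
  refine sum_congr rfl fun n hn ↦ ?_
  have n_le_m : n ≤ m := mem_range_succ_iff.mp hn
  have factorial_ne_zero : ((2 * n).factorial : K) ≠ 0 :=
    Nat.cast_ne_zero.mpr (Nat.factorial_ne_zero _)
  rw [← Nat.cast_sub n_le_m, ascPochhammer_eval_natCast_add_one,
    show m - n + 2 * n = m + n by lia, pow_mul]
  field_simp

theorem laurent_identity_general {K : Type*} [Field K] [CharZero K] (m : ℕ) (x : K) (hx : x ≠ 0) :
    x ^ (2 * m) + x ^ (-(2 * (m : ℤ) + 2)) =
      (1 + x ^ (-2 : ℤ)) *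
        ∑ n ∈ range (m + 1),
          (1 / ((2 * n).factorial : K)) * (x - 1 / x) ^ (2 * n) *
            (ascPochhammer K (2 * n)).eval ((m : K) - n + 1) := by
  have mul_inv : x * x⁻¹ = 1 := mul_inv_cancel₀ hx
  have zpow_eq (k : ℕ) : x ^ (-(k : ℤ)) = x⁻¹ ^ k := by rw [zpow_neg, zpow_natCast, inv_pow]
  have symmetric := (morganVoyce_sub_sq_of_mul_eq_one mul_inv m).1
  rw [sum_inv_factorial_mul_ascPochhammer_eq_morganVoyceSmall, one_div,
    show x ^ (-(2 * (m : ℤ) + 2)) = x⁻¹ ^ (2 * m + 2) from mod_cast zpow_eq (2 * m + 2),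
    show x ^ (-2 : ℤ) = x⁻¹ ^ 2 from zpow_eq 2]
  linear_combination (-x⁻¹) * symmetric +
    (morganVoyceSmall m ((x - x⁻¹) ^ 2) - x ^ (2 * m)) * mul_inv

/-- For every non-negative integer `m` and every nonzero `x ∈ ℂ`:
`x^{2m} + x^{−(2m+2)} = (1 + x^{−2}) · Σ_{n=0}^{m} (1/(2n)!) · (x − 1/x)^{2n} · (m−n+1)_{2n}`. -/
theorem laurent_identity (m : ℕ) (x : ℂ) (hx : x ≠ 0) :
    x ^ (2 * m) + x ^ (-(2 * (m : ℤ) + 2)) =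
      (1 + x ^ (-2 : ℤ)) *
        ∑ n ∈ Finset.range (m + 1),
          (1 / ((2 * n).factorial : ℂ)) * (x - 1 / x) ^ (2 * n) *
            (ascPochhammer ℂ (2 * n)).eval ((m : ℂ) - n + 1) :=
  laurent_identity_general m x hx
end
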